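/- For every constant C > 0 there exists ε₀ > 0 such that for all 0 < ε < ε₀ and every angular velocity Ω with 6|log ε| + 3 < Ω ≤ C/ε, no GP minimizer of E^GP_{ε,Ω} is an eigenfunction of the angular momentum; that is, there is no normalized minimizer Ψ and integer n with LΨ = nΨ (equivalently, no minimizer of the form Ψ(r,θ) = ξ(r)e^{inθ}). In particular rotational symmetry is spontaneously broken in the ground state in this regime. -/

import Mathlib

open MeasureTheory Real Filter

noncomputable section

/-- Points of the plane. -/
abbrev Pt : Type := EuclideanSpace ℝ (Fin 2)

/-- The open unit disc. -/
def B1 : Set Pt := Metric.ball 0 1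

/-- First partial derivative of a complex-valued function. -/
def pd1 (Ψ : Pt → ℂ) (x : Pt) : ℂ := fderiv ℝ Ψ x (EuclideanSpace.single 0 1)

/-- Second partial derivative of a complex-valued function. -/
def pd2 (Ψ : Pt → ℂ) (x : Pt) : ℂ := fderiv ℝ Ψ x (EuclideanSpace.single 1 1)

/-- Angular momentum operator `L = -i (x₁ ∂₂ - x₂ ∂₁)`. -/
def angMom (Ψ : Pt → ℂ) (x : Pt) : ℂ :=
  -Complex.I * ((x 0 : ℂ) * pd2 Ψ x - (x 1 : ℂ) * pd1 Ψ x)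

/-- The Gross-Pitaevskii energy density `|∇Ψ|² - Ω conj(Ψ) LΨ + |Ψ|⁴/ε²`. -/
def gpDensity (ε Ω : ℝ) (Ψ : Pt → ℂ) (x : Pt) : ℝ :=
  ‖pd1 Ψ x‖ ^ 2 + ‖pd2 Ψ x‖ ^ 2
    - Ω * (starRingEnd ℂ (Ψ x) * angMom Ψ x).re
    + ‖Ψ x‖ ^ 4 / ε ^ 2

/-- The Gross-Pitaevskii functional on the unit disc. -/
def gpEnergy (ε Ω : ℝ) (Ψ : Pt → ℂ) : ℝ := ∫ x in B1, gpDensity ε Ω Ψ x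

/-- Admissible (H¹, normalized) wave functions. -/
def gpAdm (Ψ : Pt → ℂ) : Prop :=
  DifferentiableOn ℝ Ψ B1 ∧
  IntegrableOn (fun x => ‖Ψ x‖ ^ 2) B1 ∧
  IntegrableOn (fun x => ‖pd1 Ψ x‖ ^ 2 + ‖pd2 Ψ x‖ ^ 2) B1 ∧
  IntegrableOn (fun x => ‖Ψ x‖ ^ 4) B1 ∧
  IntegrableOn (fun x => (starRingEnd ℂ (Ψ x) * angMom Ψ x).re) B1 ∧
  (∫ x in B1, ‖Ψ x‖ ^ 2) = 1

/-- The GP ground-state energy: infimum of the functional over normalized functions. -/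
def gpGround (ε Ω : ℝ) : ℝ := sInf {E | ∃ Ψ : Pt → ℂ, gpAdm Ψ ∧ E = gpEnergy ε Ω Ψ}

/-- A GP minimizer: a normalized admissible function attaining the infimum. -/
def IsGPMinimizer (ε Ω : ℝ) (Ψ : Pt → ℂ) : Prop :=
  gpAdm Ψ ∧ gpEnergy ε Ω Ψ = gpGround ε Ω

/-- The Thomas-Fermi functional. -/
def tfEnergy (Ω₀ : ℝ) (ρ : Pt → ℝ) : ℝ :=
  ∫ x in B1, ((ρ x) ^ 2 - Ω₀ ^ 2 * ‖x‖ ^ 2 * ρ x / 4)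

/-- Admissible TF densities: nonnegative, in L²(B₁), of total mass one. -/
def tfAdm (ρ : Pt → ℝ) : Prop :=
  IntegrableOn ρ B1 ∧ IntegrableOn (fun x => (ρ x) ^ 2) B1 ∧
  (∀ᵐ x ∂(volume.restrict B1), 0 ≤ ρ x) ∧ (∫ x in B1, ρ x) = 1

/-- The TF ground-state energy. -/
def tfGround (Ω₀ : ℝ) : ℝ := sInf {E | ∃ ρ : Pt → ℝ, tfAdm ρ ∧ E = tfEnergy Ω₀ ρ}

/-- Radius of the TF "hole". -/
def R0 (Ω₀ : ℝ) : ℝ := Real.sqrt (1 - 4 / (Real.sqrt π * Ω₀))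

/-- The TF minimizer. -/
def rhoTF (Ω₀ : ℝ) (x : Pt) : ℝ :=
  if Ω₀ ≤ 4 / Real.sqrt π then 1 / π - Ω₀ ^ 2 / 16 * (1 - 2 * ‖x‖ ^ 2)
  else max 0 (Ω₀ ^ 2 / 8 * (‖x‖ ^ 2 - 1) + Ω₀ / (2 * Real.sqrt π))


lemma nw_avg_in {x : ℂ} {ρ : ℝ} (h0 : 0 ≤ ρ) (h : ρ < ‖x‖) :
    circleAverage (fun z => (x - z)⁻¹) 0 ρ = x⁻¹ := by
  have h1 : DiffContOnCl ℂ (fun z : ℂ => (x - z)⁻¹) (Metric.ball 0 |ρ|) := by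
    apply DifferentiableOn.diffContOnCl
    intro z hz
    have hz' : ‖z‖ ≤ ρ := by
      have := Metric.closure_ball_subset_closedBall hz
      simpa [abs_of_nonneg h0] using this
    apply DifferentiableAt.differentiableWithinAt
    apply DifferentiableAt.inv (by fun_prop)
    intro h3
    rw [sub_eq_zero] at h3
    rw [h3] at h; linarith
  simpa using h1.circleAverage

lemma nw_avg_out {x : ℂ} {ρ : ℝ} (h : ‖x‖ < ρ) :
    circleAverage (fun z => (x - z)⁻¹) 0 ρ = 0 := by
  have h0 : 0 < ρ := lt_of_le_of_lt (norm_nonneg _) h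
  have hne : ∀ z ∈ Metric.closedBall (0:ℂ) ρ, (starRingEnd ℂ) x * z - (ρ:ℂ)^2 ≠ 0 := by
    intro z hz h3
    rw [sub_eq_zero] at h3
    have h4 := congrArg norm h3
    simp at h4 hz
    have : ‖x‖ * ‖z‖ ≤ ‖x‖ * ρ := by gcongr
    nlinarith
  have hd : DifferentiableOn ℂ (fun z : ℂ => z * ((starRingEnd ℂ) x * z - (ρ:ℂ)^2)⁻¹)
      (Metric.closedBall 0 ρ) := by
    intro z hz
    apply DifferentiableAt.differentiableWithinAt
    exact differentiableAt_id.mul (DifferentiableAt.inv (by fun_prop) (hne z hz))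
  have h1 : DiffContOnCl ℂ (fun z : ℂ => z * ((starRingEnd ℂ) x * z - (ρ:ℂ)^2)⁻¹)
      (Metric.ball 0 |ρ|) := by
    apply DifferentiableOn.diffContOnCl
    rw [abs_of_pos h0]
    exact hd.mono Metric.closure_ball_subset_closedBall
  have h2 := h1.circleAverage
  have hci : CircleIntegrable (fun z : ℂ => z * ((starRingEnd ℂ) x * z - (ρ:ℂ)^2)⁻¹) 0 ρ := by
    apply ContinuousOn.circleIntegrable h0.le
    exact hd.continuousOn.mono Metric.sphere_subset_closedBall
  have h3 := ContinuousLinearMap.circleAverage_comp_comm (Complex.conjCLE : ℂ →L[ℝ] ℂ) hci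
  rw [h2] at h3
  simp only [zero_mul, map_zero] at h3
  refine Eq.trans ?_ h3
  apply circleAverage_congr_sphere
  intro z hz
  simp only [mem_sphere_iff_norm, sub_zero, abs_of_pos h0] at hz
  have hz0 : z ≠ 0 := by intro h; rw [h] at hz; simp at hz; linarith
  have hzc : (starRingEnd ℂ) z ≠ 0 := by simpa using hz0
  have e : z * (starRingEnd ℂ) z = (ρ:ℂ)^2 := by
    rw [Complex.mul_conj, Complex.normSq_eq_norm_sq, hz]; push_cast; rfl
  simp only [Function.comp, ContinuousLinearEquiv.coe_coe, Complex.conjCLE_apply, map_mul, map_inv₀, map_sub, map_pow, Complex.conj_conj, Complex.conj_ofReal]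
  rw [← e, ← sub_mul, mul_inv]
  field_simp

lemma nw_integrable (x : ℂ) (R : ℝ) : IntegrableOn (fun p : ℂ => (x - p)⁻¹) (Metric.ball 0 R) := by
  have h1 : IntegrableOn (fun p : ℂ => (fun t : ℝ => t⁻¹) ‖p‖) (Metric.ball 0 (‖x‖ + R)) := by
    rw [integrableOn_fun_norm_addHaar]
    simp only [Complex.finrank_real_complex]
    have : IntegrableOn (fun y : ℝ => (1:ℝ)) (Set.Ioo 0 (‖x‖+R)) := by simp
    refine this.congr_fun ?_ measurableSet_Ioo
    intro y hy
    have : y ≠ 0 := hy.1.ne'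
    simp [this]
  have h2 : IntegrableOn (fun p : ℂ => p⁻¹) (Metric.ball 0 (‖x‖ + R)) := by
    refine Integrable.mono' h1 (by fun_prop) ?_
    filter_upwards with p; simp
  rw [← integrable_indicator_iff measurableSet_ball] at h2 ⊢
  have h3 := h2.comp_sub_left x
  rw [integrable_indicator_iff measurableSet_ball]
  have h4 := h3.integrableOn (s := Metric.ball 0 R)
  refine h4.congr_fun ?_ measurableSet_ball
  intro p hp
  have : x - p ∈ Metric.ball (0:ℂ) (‖x‖+R) := by
    simp at hp ⊢
    linarith [norm_sub_le x p]
  simp only [Set.indicator_of_mem this]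

lemma nw_inner (f : ℂ → ℂ) (r : ℝ) :
    ∫ θ in Set.Ioo (-π) π, f (Complex.polarCoord.symm (r, θ)) = (2*π) • circleAverage f 0 r := by
  rw [circleAverage_eq_integral_add (-π), smul_smul, mul_inv_cancel₀ (by positivity), one_smul,
    intervalIntegral.integral_comp_add_right (fun θ => f (circleMap 0 r θ)),
    intervalIntegral.integral_of_le (by linarith [pi_pos]), integral_Ioc_eq_integral_Ioo]
  have : 2 * π + -π = π := by ring
  rw [this, zero_add]
  congr 1
  ext θ
  congr 1
  rw [Complex.polarCoord_symm_apply, circleMap]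
  simp [Complex.exp_mul_I]

lemma nw_complex {x : ℂ} {R : ℝ} (hx : ‖x‖ < R) :
    ∫ p in Metric.ball (0:ℂ) R, (x - p)⁻¹ = π * (starRingEnd ℂ) x := by
  set F : ℂ → ℂ := (Metric.ball (0:ℂ) R).indicator (fun p => (x - p)⁻¹) with hF
  have hFi : Integrable F := (integrable_indicator_iff measurableSet_ball).2 (nw_integrable x R)
  have hmeas : Measurable F := by
    apply Measurable.indicator (by fun_prop) measurableSet_ball
  have hps : Measurable (fun p : ℝ × ℝ => Complex.polarCoord.symm p) := by
    simp only [Complex.polarCoord_symm_apply]; fun_prop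
  have hT : polarCoord.target = Set.Ioi 0 ×ˢ Set.Ioo (-π) π := rfl
  rw [← integral_indicator measurableSet_ball, ← hF, ← Complex.integral_comp_polarCoord_symm, hT,
    Measure.volume_eq_prod, setIntegral_prod]
  · have e : ∀ r ∈ Set.Ioi (0:ℝ), r ≠ ‖x‖ → ∫ θ in Set.Ioo (-π) π, (r, θ).1 • F (Complex.polarCoord.symm (r, θ))
        = (Set.Ioo 0 ‖x‖).indicator (fun r : ℝ => (r:ℂ) * (2 * π * x⁻¹)) r := by
      intro r hr hrx
      have hr' : 0 < r := hr
      simp only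
      rw [integral_smul, nw_inner]
      have hsph : ∀ z ∈ Metric.sphere (0:ℂ) |r|, ‖z‖ = r := by
        intro z hz; simpa [abs_of_pos hr'] using hz
      by_cases hrR : r < R
      · have : circleAverage F 0 r = circleAverage (fun z => (x - z)⁻¹) 0 r := by
          apply circleAverage_congr_sphere
          intro z hz
          rw [hF, Set.indicator_of_mem]
          simpa [hsph z hz] using hrR
        rw [this]
        rcases lt_or_gt_of_ne hrx with h | h
        · rw [nw_avg_in hr'.le h, Set.indicator_of_mem (by exact ⟨hr', h⟩)]
          simp
        · rw [nw_avg_out h, Set.indicator_of_notMem (by simp; intros; linarith)]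
          simp
      · have : circleAverage F 0 r = circleAverage (fun z => (0:ℂ)) 0 r := by
          apply circleAverage_congr_sphere
          intro z hz
          rw [hF, Set.indicator_of_notMem]
          simpa [hsph z hz] using hrR
        rw [this, circleAverage_const, Set.indicator_of_notMem (by simp; intros; linarith)]
        simp
    have e2 : ∫ r in Set.Ioi (0:ℝ), ∫ θ in Set.Ioo (-π) π, (r, θ).1 • F (Complex.polarCoord.symm (r, θ))
        = ∫ r in Set.Ioi (0:ℝ), (Set.Ioo 0 ‖x‖).indicator (fun r : ℝ => (r:ℂ) * (2 * π * x⁻¹)) r := by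
      apply setIntegral_congr_ae measurableSet_Ioi
      have : ∀ᵐ r : ℝ, r ≠ ‖x‖ := by simp [ae_iff]
      filter_upwards [this] with r h1 h2
      exact e r h2 h1
    rw [e2, setIntegral_indicator measurableSet_Ioo]
    have : Set.Ioi (0:ℝ) ∩ Set.Ioo 0 ‖x‖ = Set.Ioo 0 ‖x‖ := by
      ext r; simp
    rw [this, integral_mul_const, ← integral_Ioc_eq_integral_Ioo,
      ← intervalIntegral.integral_of_le (norm_nonneg _), intervalIntegral.integral_ofReal, integral_id]
    by_cases hx0 : x = 0
    · simp [hx0]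
    · have e : (‖x‖:ℂ)^2 = x * (starRingEnd ℂ) x := by
        rw [Complex.mul_conj, Complex.normSq_eq_norm_sq]; push_cast; rfl
      push_cast
      rw [e]; field_simp
      ring
  · rw [← Measure.volume_eq_prod, ← hT]
    refine ⟨?_, ?_⟩
    · exact (measurable_fst.smul (hmeas.comp hps)).aestronglyMeasurable
    · have h := Complex.lintegral_comp_polarCoord_symm (fun z => ‖F z‖ₑ)
      rw [hasFiniteIntegral_iff_enorm]
      have h2 : ∫⁻ p in polarCoord.target, ‖p.1 • F (Complex.polarCoord.symm p)‖ₑ = ∫⁻ (p : ℂ), ‖F p‖ₑ := by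
        rw [← h]
        apply setLIntegral_congr_fun polarCoord.open_target.measurableSet
        intro p hp
        have : 0 < p.1 := hp.1
        simp only [enorm_smul, smul_eq_mul]
        rw [Real.enorm_of_nonneg this.le]
      rw [h2]
      exact hFi.2

/-- complex coordinate -/
def zc (x : Pt) : ℂ := (x 0 : ℂ) + (x 1 : ℂ) * Complex.I

lemma zc_eq (x : Pt) : zc x = Complex.orthonormalBasisOneI.repr.symm x := by
  rw [← Complex.orthonormalBasisOneI.sum_repr (Complex.orthonormalBasisOneI.repr.symm x)]
  simp [Fin.sum_univ_two, zc]

lemma zc_eq' : zc = Complex.orthonormalBasisOneI.repr.symm := funext zc_eq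

lemma norm_zc (x : Pt) : ‖zc x‖ = ‖x‖ := by rw [zc_eq, LinearIsometryEquiv.norm_map]

lemma pt_normsq (x : Pt) : ‖x‖ ^ 2 = x 0 ^ 2 + x 1 ^ 2 := by
  rw [EuclideanSpace.norm_sq_eq]; simp [Fin.sum_univ_two]

lemma zc_mp : MeasurePreserving zc := by
  rw [zc_eq']; exact Complex.orthonormalBasisOneI.measurePreserving_repr_symm

lemma zc_me : MeasurableEmbedding zc := by
  rw [zc_eq']
  exact Complex.orthonormalBasisOneI.repr.symm.toHomeomorph.measurableEmbedding

lemma zc_pre (R : ℝ) : zc ⁻¹' Metric.ball 0 R = Metric.ball 0 R := by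
  ext x; simp [norm_zc]

lemma zc_sub (x y : Pt) : zc (x - y) = zc x - zc y := by
  simp [zc]; ring

lemma nw_pt_int (x : Pt) (R : ℝ) :
    IntegrableOn (fun p : Pt => (zc (x - p))⁻¹) (Metric.ball 0 R) := by
  have h := nw_integrable (zc x) R
  rw [← zc_mp.integrableOn_comp_preimage zc_me, zc_pre] at h
  refine h.congr_fun ?_ measurableSet_ball
  intro p hp; simp [zc_sub]

lemma nw_pt {x : Pt} {R : ℝ} (hx : ‖x‖ < R) :
    ∫ p in Metric.ball (0:Pt) R, (zc (x - p))⁻¹ = π * (starRingEnd ℂ) (zc x) := by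
  rw [← nw_complex (x := zc x) (R := R) (by rwa [norm_zc]),
    ← zc_mp.setIntegral_preimage_emb zc_me, zc_pre]
  simp [zc_sub]

lemma zc_inv_re (y : Pt) : ((zc y)⁻¹).re = y 0 / (y 0 ^ 2 + y 1 ^ 2) := by
  simp [Complex.inv_re, Complex.normSq_apply, zc]; ring

lemma zc_inv_im (y : Pt) : ((zc y)⁻¹).im = - y 1 / (y 0 ^ 2 + y 1 ^ 2) := by
  simp [Complex.inv_im, Complex.normSq_apply, zc]; ring

lemma nw_int0 (x : Pt) (R : ℝ) :
    IntegrableOn (fun p : Pt => (x - p) 0 / ((x - p) 0 ^ 2 + (x - p) 1 ^ 2)) (Metric.ball 0 R) := by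
  have := (nw_pt_int x R).re
  exact this.congr (by filter_upwards with p; exact zc_inv_re _)

lemma nw_int1 (x : Pt) (R : ℝ) :
    IntegrableOn (fun p : Pt => (x - p) 1 / ((x - p) 0 ^ 2 + (x - p) 1 ^ 2)) (Metric.ball 0 R) := by
  have := (nw_pt_int x R).im.neg
  exact this.congr (by
    filter_upwards with p
    have := zc_inv_im (x - p)
    change -((zc (x - p))⁻¹).im = _
    rw [this]; ring)

lemma nw_val0 {x : Pt} {R : ℝ} (hx : ‖x‖ < R) :
    ∫ p in Metric.ball (0:Pt) R, (x - p) 0 / ((x - p) 0 ^ 2 + (x - p) 1 ^ 2) = π * x 0 := by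
  have h := Complex.reCLM.integral_comp_comm (nw_pt_int x R)
  rw [nw_pt hx] at h
  simp only [Complex.reCLM_apply, zc_inv_re] at h
  rw [h]; simp [zc]

lemma nw_val1 {x : Pt} {R : ℝ} (hx : ‖x‖ < R) :
    ∫ p in Metric.ball (0:Pt) R, (x - p) 1 / ((x - p) 0 ^ 2 + (x - p) 1 ^ 2) = π * x 1 := by
  have h := Complex.imCLM.integral_comp_comm (nw_pt_int x R)
  rw [nw_pt hx] at h
  simp only [Complex.imCLM_apply, zc_inv_im, neg_div, integral_neg] at h
  rw [neg_eq_iff_eq_neg] at h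
  rw [h]; simp [zc]

lemma pt_ball_vol (x : Pt) {r : ℝ} (hr : 0 ≤ r) : volume.real (Metric.ball x r) = π * r ^ 2 := by
  rw [Measure.real, EuclideanSpace.volume_ball_fin_two]
  simp [ENNReal.toReal_ofReal, hr, pi_pos.le]; ring

/-- radial integration -/
lemma radial_int (f : ℝ → ℝ) :
    ∫ x : Pt, f ‖x‖ = 2 * π * ∫ y in Set.Ioi (0:ℝ), y * f y := by
  rw [integral_fun_norm_addHaar volume f, pt_ball_vol 0 zero_le_one]
  simp; ring

/-- integral of the inverse square over an annulus -/
lemma annulus_int {s T : ℝ} (hs : 0 < s) (hT : s ≤ T) :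
    ∫ x : Pt, (Set.Ioc s T).indicator (fun y : ℝ => (y ^ 2)⁻¹) ‖x‖ = 2 * π * Real.log (T / s) := by
  rw [radial_int]
  have : ∀ y : ℝ, y * (Set.Ioc s T).indicator (fun y : ℝ => (y ^ 2)⁻¹) y
      = (Set.Ioc s T).indicator (fun y : ℝ => y⁻¹) y := by
    intro y
    by_cases h : y ∈ Set.Ioc s T
    · have : 0 < y := hs.trans h.1
      simp only [Set.indicator_of_mem h]; field_simp
    · simp [Set.indicator_of_notMem h]
  simp_rw [this]
  rw [setIntegral_indicator measurableSet_Ioc, Set.inter_eq_right.2, ← intervalIntegral.integral_of_le hT,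
    integral_inv_of_pos hs (hs.trans_le hT)]
  intro y hy
  exact hs.trans hy.1

/-- radial profile of the regularized vortex (as a function of `t = r ^ 2`) -/
def hh (s t : ℝ) : ℝ := if t ≤ s ^ 2 then (3 - t / s ^ 2) / (2 * s) else (√t)⁻¹

def hh' (s t : ℝ) : ℝ := if t ≤ s ^ 2 then -1 / (2 * s ^ 3) else -1 / (2 * t * √t)

lemma hh_deriv {s : ℝ} (hs : 0 < s) (t : ℝ) : HasDerivAt (hh s) (hh' s t) t := by
  have hA : ∀ t : ℝ, HasDerivAt (fun t => (3 - t / s ^ 2) / (2 * s)) (-1 / (2 * s ^ 3)) t := by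
    intro t
    have := (((hasDerivAt_id t).div_const (s^2)).const_sub 3).div_const (2*s)
    refine HasDerivAt.congr_deriv this ?_
    field_simp
  have hB : ∀ t : ℝ, 0 < t → HasDerivAt (fun t => (√t)⁻¹) (-1 / (2 * t * √t)) t := by
    intro t ht
    have h1 := (hasDerivAt_sqrt ht.ne').inv (by positivity)
    refine HasDerivAt.congr_deriv h1 ?_
    have : √t ^ 2 = t := Real.sq_sqrt ht.le
    rw [this]; field_simp
  have hs2 : √(s^2) = s := Real.sqrt_sq hs.le
  rcases lt_trichotomy t (s^2) with h | h | h
  · have : hh' s t = -1 / (2 * s ^ 3) := by simp [hh', h.le]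
    rw [this]
    refine (hA t).congr_of_eventuallyEq ?_
    filter_upwards [gt_mem_nhds h] with u hu
    simp [hh, le_of_lt hu]
  · have e : hh' s t = -1 / (2 * s ^ 3) := by simp [hh', h.le]
    rw [e, ← hasDerivWithinAt_univ, ← Set.Iic_union_Ici (a := t)]
    apply HasDerivWithinAt.union
    · refine (hA t).hasDerivWithinAt.congr ?_ ?_
      · intro u hu
        have : u ≤ s^2 := by rw [← h]; exact hu
        simp [hh, this]
      · simp [hh, h]
    · have ht : 0 < t := by rw [h]; positivity
      have hB' := hB t ht
      have e2 : -1 / (2 * t * √t) = -1 / (2 * s ^ 3) := by rw [h, hs2]; ring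
      rw [e2] at hB'
      have key : ∀ u, t ≤ u → hh s u = (√u)⁻¹ := by
        intro u hu
        rcases eq_or_lt_of_le hu with h1 | h1
        · rw [← h1, h]; simp only [hh, le_refl, if_true, hs2]; field_simp; norm_num
        · have : ¬ u ≤ s^2 := by rw [← h]; exact not_le.2 h1
          simp [hh, this]
      exact hB'.hasDerivWithinAt.congr (fun u hu => key u hu) (key t le_rfl)
  · have ht : 0 < t := lt_trans (by positivity) h
    have : hh' s t = -1 / (2 * t * √t) := by simp [hh', not_le.2 h]
    rw [this]
    refine (hB t ht).congr_of_eventuallyEq ?_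
    filter_upwards [lt_mem_nhds h] with u hu
    simp [hh, hu]

lemma hh_out {s t : ℝ} (hs : 0 < s) (ht : s ^ 2 ≤ t) :
    hh s t = (√t)⁻¹ ∧ t * hh s t ^ 2 = 1 ∧ hh s t + 2 * t * hh' s t = 0 := by
  have ht0 : 0 < t := lt_of_lt_of_le (by positivity) ht
  have hq : √t ^ 2 = t := Real.sq_sqrt ht0.le
  have hq0 : 0 < √t := Real.sqrt_pos.2 ht0
  have hs2 : √(s^2) = s := Real.sqrt_sq hs.le
  rcases eq_or_lt_of_le ht with h | h
  · have e1 : hh s t = s⁻¹ := by rw [← h]; simp only [hh, le_refl, if_true]; field_simp; norm_num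
    have e2 : hh' s t = -1 / (2 * s ^ 3) := by rw [← h]; simp only [hh', le_refl, if_true]
    rw [e1, e2, ← h, hs2]
    refine ⟨rfl, by field_simp, by field_simp; norm_num⟩
  · have e1 : hh s t = (√t)⁻¹ := by simp [hh, not_le.2 h]
    have e2 : hh' s t = -1 / (2 * t * √t) := by simp [hh', not_le.2 h]
    rw [e1, e2]
    refine ⟨rfl, by rw [inv_pow, hq]; field_simp, by field_simp; norm_num⟩

lemma hh_in {s t : ℝ} (hs : 0 < s) (h0 : 0 ≤ t) (ht : t ≤ s ^ 2) :
    0 ≤ hh s t ∧ hh s t ≤ 3 / (2 * s) ∧ t * hh s t ^ 2 ≤ 1 ∧ hh' s t ≤ 0 ∧ 0 ≤ hh s t + 2 * t * hh' s t := by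
  set u := t / s ^ 2 with hu
  have hu0 : 0 ≤ u := by positivity
  have hu1 : u ≤ 1 := by rw [hu, div_le_one (by positivity)]; exact ht
  have htu : t = u * s ^ 2 := by rw [hu]; field_simp
  have e1 : hh s t = (3 - u) / (2 * s) := by simp [hh, ht, hu]
  have e2 : hh' s t = -1 / (2 * s ^ 3) := by simp [hh', ht]
  rw [e1, e2]
  refine ⟨by apply div_nonneg <;> linarith, by gcongr; linarith, ?_, ?_, ?_⟩
  · have : t * ((3 - u) / (2 * s)) ^ 2 = u * (3 - u)^2 / 4 := by rw [htu]; field_simp; norm_num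
    rw [this]; nlinarith [mul_nonneg hu0 (sub_nonneg.2 hu1), mul_nonneg (sub_nonneg.2 hu1) (sub_nonneg.2 hu1)]
  · apply div_nonpos_of_nonpos_of_nonneg <;> [norm_num; positivity]
  · have : (3 - u) / (2 * s) + 2 * t * (-1 / (2 * s ^ 3)) = (3 - 3 * u) / (2 * s) := by
      rw [htu]; field_simp; ring
    rw [this]; apply div_nonneg <;> linarith

lemma hh_all {s t : ℝ} (hs : 0 < s) (h0 : 0 ≤ t) :
    0 ≤ hh s t ∧ hh s t ≤ 3 / (2 * s) ∧ t * hh s t ^ 2 ≤ 1 ∧ 0 ≤ hh s t + 2 * t * hh' s t ∧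
      hh s t + 2 * t * hh' s t ≤ hh s t := by
  rcases le_total t (s^2) with h | h
  · obtain ⟨a, b, c, d, e⟩ := hh_in hs h0 h
    exact ⟨a, b, c, e, by nlinarith⟩
  · obtain ⟨a, b, c⟩ := hh_out hs h
    have : s ≤ √t := Real.le_sqrt_of_sq_le h
    have hp : 0 ≤ hh s t := by rw [a]; positivity
    refine ⟨hp, ?_, b.le, c.ge, by rw [c]; exact hp⟩
    rw [a]
    calc (√t)⁻¹ ≤ s⁻¹ := by gcongr
      _ ≤ 3 / (2 * s) := by rw [inv_eq_one_div, div_le_div_iff₀ hs (by positivity)]; linarith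

/-- squared modulus of a point -/
def tt (y : Pt) : ℝ := y 0 ^ 2 + y 1 ^ 2

lemma tt_nonneg (y : Pt) : 0 ≤ tt y := by unfold tt; positivity

lemma tt_eq (y : Pt) : tt y = ‖y‖ ^ 2 := (pt_normsq y).symm

/-- the regularized vortex -/
def vph (s : ℝ) (y : Pt) : ℂ := (hh s (tt y) : ℂ) * zc y

lemma coord_fderiv (i : Fin 2) (y : Pt) :
    HasFDerivAt (fun y : Pt => y i) (EuclideanSpace.proj i : Pt →L[ℝ] ℝ) y :=
  (EuclideanSpace.proj i : Pt →L[ℝ] ℝ).hasFDerivAt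

lemma tt_fderiv (y : Pt) : HasFDerivAt tt ((2 * y 0) • (EuclideanSpace.proj 0 : Pt →L[ℝ] ℝ)
    + (2 * y 1) • (EuclideanSpace.proj 1 : Pt →L[ℝ] ℝ)) y := by
  have := ((coord_fderiv 0 y).pow 2).add ((coord_fderiv 1 y).pow 2)
  refine this.congr_fderiv ?_
  simp

/-- `zc` as a linear map -/
def zcL : Pt →L[ℝ] ℂ := Complex.orthonormalBasisOneI.repr.symm.toContinuousLinearEquiv

lemma zcL_apply (y : Pt) : zcL y = zc y := by rw [zc_eq]; rfl

lemma zc_fderiv (y : Pt) : HasFDerivAt zc zcL y := by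
  have := zcL.hasFDerivAt (x := y)
  exact this.congr_of_eventuallyEq (by filter_upwards with y; rw [zcL_apply])

lemma vph_fderiv {s : ℝ} (hs : 0 < s) (y : Pt) : DifferentiableAt ℝ (vph s) y ∧
    pd1 (vph s) y = hh s (tt y) + 2 * y 0 * hh' s (tt y) * zc y ∧
    pd2 (vph s) y = Complex.I * hh s (tt y) + 2 * y 1 * hh' s (tt y) * zc y := by
  have h1 := ((hh_deriv hs (tt y)).comp_hasFDerivAt y (tt_fderiv y))
  have h2 := Complex.ofRealCLM.hasFDerivAt.comp y h1
  have h3 := h2.mul (zc_fderiv y)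
  have h4 : HasFDerivAt (vph s) _ y := h3
  refine ⟨h4.differentiableAt, ?_, ?_⟩
  · rw [pd1, h4.fderiv]
    simp [zcL_apply, zc]
    ring
  · rw [pd2, h4.fderiv]
    simp [zcL_apply, zc]
    ring

lemma tt_neg (y : Pt) : tt (-y) = tt y := by simp [tt]

lemma hh_meas (s : ℝ) : Measurable (hh s) := by
  unfold hh
  exact Measurable.ite measurableSet_Iic (by fun_prop) (by fun_prop)

lemma hh'_meas (s : ℝ) : Measurable (hh' s) := by
  unfold hh'
  exact Measurable.ite measurableSet_Iic (by fun_prop) (by fun_prop)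

lemma tt_meas : Measurable tt := by unfold tt; fun_prop

def k0 (s : ℝ) (y : Pt) : ℝ := tt y * hh s (tt y) ^ 2

def kG (s : ℝ) (y : Pt) : ℝ := hh s (tt y) ^ 2 + (hh s (tt y) + 2 * tt y * hh' s (tt y)) ^ 2

def ka (s : ℝ) (i : Fin 2) (y : Pt) : ℝ :=
  y i * (hh s (tt y) * (hh s (tt y) + 2 * tt y * hh' s (tt y)))

def ke (s : ℝ) (i : Fin 2) (y : Pt) : ℝ := y i * hh s (tt y) ^ 2

lemma hhtt_meas (s : ℝ) : Measurable (fun y => hh s (tt y)) := (hh_meas s).comp tt_meas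

lemma hh'tt_meas (s : ℝ) : Measurable (fun y => hh' s (tt y)) := (hh'_meas s).comp tt_meas

lemma k0_meas (s : ℝ) : Measurable (k0 s) := by
  have := hhtt_meas s; have := tt_meas; unfold k0; fun_prop

lemma kG_meas (s : ℝ) : Measurable (kG s) := by
  have := hhtt_meas s; have := tt_meas; have := hh'tt_meas s; unfold kG; fun_prop

lemma ka_meas (s : ℝ) (i : Fin 2) : Measurable (ka s i) := by
  have := hhtt_meas s; have := tt_meas; have := hh'tt_meas s; unfold ka; fun_prop

lemma ke_meas (s : ℝ) (i : Fin 2) : Measurable (ke s i) := by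
  have := hhtt_meas s; unfold ke; fun_prop

lemma k0_eq (s : ℝ) (y : Pt) : ‖vph s y‖ ^ 2 = k0 s y := by
  rw [vph, k0, norm_mul, norm_zc, mul_pow, tt_eq]; simp; ring

lemma kG_eq {s : ℝ} (hs : 0 < s) (y : Pt) :
    ‖pd1 (vph s) y‖ ^ 2 + ‖pd2 (vph s) y‖ ^ 2 = kG s y := by
  obtain ⟨_, h1, h2⟩ := vph_fderiv hs y
  rw [h1, h2, kG, ← Complex.normSq_eq_norm_sq, ← Complex.normSq_eq_norm_sq,
    Complex.normSq_apply, Complex.normSq_apply]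
  generalize hh s (tt y) = a
  generalize hh' s (tt y) = b
  simp [zc, tt]
  ring

lemma kae_eq {s : ℝ} (hs : 0 < s) (y : Pt) :
    (starRingEnd ℂ) (vph s y) * pd1 (vph s) y = ka s 0 y - Complex.I * ke s 1 y ∧
    (starRingEnd ℂ) (vph s y) * pd2 (vph s) y = ka s 1 y + Complex.I * ke s 0 y := by
  obtain ⟨_, h1, h2⟩ := vph_fderiv hs y
  rw [h1, h2, vph, ka, ka, ke, ke]
  generalize hh s (tt y) = a
  generalize hh' s (tt y) = b
  constructor
  · apply Complex.ext <;> simp [zc, tt, pow_two] <;> ring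
  · apply Complex.ext <;> simp [zc, tt, pow_two] <;> ring

lemma k0_bd {s : ℝ} (hs : 0 < s) (y : Pt) : 0 ≤ k0 s y ∧ k0 s y ≤ 1 :=
  ⟨by unfold k0; have := tt_nonneg y; positivity, (hh_all hs (tt_nonneg y)).2.2.1⟩

lemma kG_bd {s : ℝ} (hs : 0 < s) (y : Pt) : 0 ≤ kG s y ∧ kG s y ≤ 9 / (2 * s ^ 2) := by
  refine ⟨by unfold kG; positivity, ?_⟩
  obtain ⟨a, b, c, d, e⟩ := hh_all hs (tt_nonneg y)
  have h1 : hh s (tt y) ^ 2 ≤ (3 / (2 * s)) ^ 2 := by gcongr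
  have h2 : (hh s (tt y) + 2 * tt y * hh' s (tt y)) ^ 2 ≤ (3 / (2 * s)) ^ 2 := by
    gcongr; exact e.trans b
  have : 9 / (2 * s ^ 2) = (3 / (2 * s)) ^ 2 + (3 / (2 * s)) ^ 2 := by field_simp; norm_num
  rw [this]; exact add_le_add h1 h2

lemma yh_bd {s : ℝ} (hs : 0 < s) (y : Pt) (i : Fin 2) : |y i * hh s (tt y)| ≤ 1 := by
  obtain ⟨a, b, c, d, e⟩ := hh_all hs (tt_nonneg y)
  rw [← sq_le_one_iff_abs_le_one, mul_pow]
  refine le_trans ?_ c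
  gcongr
  unfold tt
  fin_cases i <;> simp <;> positivity

lemma ka_bd {s : ℝ} (hs : 0 < s) (i : Fin 2) (y : Pt) : |ka s i y| ≤ 3 / (2 * s) := by
  obtain ⟨a, b, c, d, e⟩ := hh_all hs (tt_nonneg y)
  unfold ka
  rw [← mul_assoc, abs_mul, abs_of_nonneg d]
  calc _ ≤ 1 * (3 / (2 * s)) := by
        apply mul_le_mul (yh_bd hs y i) (e.trans b) d zero_le_one
    _ = _ := one_mul _

lemma ke_bd {s : ℝ} (hs : 0 < s) (i : Fin 2) (y : Pt) : |ke s i y| ≤ 3 / (2 * s) := by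
  obtain ⟨a, b, c, d, e⟩ := hh_all hs (tt_nonneg y)
  unfold ke
  rw [pow_two, ← mul_assoc, abs_mul, abs_of_nonneg a]
  calc _ ≤ 1 * (3 / (2 * s)) := by
        apply mul_le_mul (yh_bd hs y i) b a zero_le_one
    _ = _ := one_mul _

lemma tt_ge {s : ℝ} (hs : 0 < s) {y : Pt} (h : s ≤ ‖y‖) : s ^ 2 ≤ tt y := by
  rw [tt_eq]; gcongr

lemma cpt_conv {s : ℝ} {w : Pt → ℝ} (hw : ∀ y, s ≤ ‖y‖ → w y = 0) {x : Pt} (hx : ‖x‖ < 1) :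
    ∫ p in Metric.ball (0:Pt) (1 + s), w (x - p) = ∫ y, w y := by
  rw [setIntegral_eq_integral_of_forall_compl_eq_zero, integral_sub_left_eq_self w volume x]
  intro p hp
  apply hw
  simp at hp
  have := norm_sub_norm_le p x
  rw [norm_sub_rev] at this
  linarith

lemma odd_int {w : Pt → ℝ} (hw : ∀ y, w (-y) = - w y) : ∫ y, w y = 0 := by
  have h := integral_neg_eq_self w volume
  simp_rw [hw, integral_neg] at h
  linarith

instance ballFin (R : ℝ) : IsFiniteMeasure (volume.restrict (Metric.ball (0:Pt) R)) :=
  ⟨by rw [Measure.restrict_apply_univ]; exact measure_ball_lt_top⟩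

lemma ker_int {w : Pt → ℝ} (hm : Measurable w) {c : ℝ} (hb : ∀ y, |w y| ≤ c) (x : Pt) (R : ℝ) :
    IntegrableOn (fun p => w (x - p)) (Metric.ball (0:Pt) R) := by
  refine Integrable.of_bound (C := c) ?_ ?_
  · exact (hm.comp (measurable_const.sub measurable_id)).aestronglyMeasurable
  · filter_upwards with p; exact hb _

/-- mass defect of the vortex core -/
def kap (s : ℝ) : ℝ := ∫ y, (1 - k0 s y)

lemma one_sub_k0_le {s : ℝ} (hs : 0 < s) (y : Pt) :
    1 - k0 s y ≤ (Metric.ball (0:Pt) s).indicator (fun _ => (1:ℝ)) y := by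
  by_cases h : y ∈ Metric.ball (0:Pt) s
  · rw [Set.indicator_of_mem h]; linarith [(k0_bd hs y).1]
  · rw [Set.indicator_of_notMem h]
    simp at h
    have := (hh_out hs (tt_ge hs h)).2.1
    rw [k0, this]; simp

lemma kap_bd {s : ℝ} (hs : 0 < s) : 0 ≤ kap s ∧ kap s ≤ π * s ^ 2 := by
  refine ⟨integral_nonneg (fun y => by simpa using (k0_bd hs y).2), ?_⟩
  rw [← pt_ball_vol 0 hs.le]
  have : volume.real (Metric.ball (0:Pt) s) = ∫ y, (Metric.ball (0:Pt) s).indicator (fun _ => (1:ℝ)) y := by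
    rw [integral_indicator measurableSet_ball]; simp
  rw [this]
  apply integral_mono_of_nonneg
  · filter_upwards with y; simpa using (k0_bd hs y).2
  · rw [integrable_indicator_iff measurableSet_ball]
    exact integrable_const _
  · filter_upwards with y; exact one_sub_k0_le hs y

lemma I_k0 {s : ℝ} (hs : 0 < s) {x : Pt} (hx : ‖x‖ < 1) :
    ∫ p in Metric.ball (0:Pt) (1 + s), k0 s (x - p) = π * (1 + s) ^ 2 - kap s := by
  have h1 : ∫ p in Metric.ball (0:Pt) (1 + s), (1 - k0 s (x - p)) = kap s := by
    apply cpt_conv (s := s) (w := fun y => 1 - k0 s y) _ hx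
    intro y hy
    have := (hh_out hs (tt_ge hs hy)).2.1
    rw [k0, this]; simp
  rw [integral_sub (integrable_const _)
    (ker_int (k0_meas s) (c := 1) (fun y => by rw [abs_of_nonneg (k0_bd hs y).1]; exact (k0_bd hs y).2) x _)] at h1
  simp at h1
  rw [pt_ball_vol 0 (by linarith)] at h1
  linarith

lemma I_ka {s : ℝ} (hs : 0 < s) {x : Pt} (hx : ‖x‖ < 1) (i : Fin 2) :
    ∫ p in Metric.ball (0:Pt) (1 + s), ka s i (x - p) = 0 := by
  rw [cpt_conv (w := ka s i) _ hx, odd_int]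
  · intro y; simp [ka, tt_neg]
  · intro y hy
    have := (hh_out hs (tt_ge hs hy)).2.2
    rw [ka, this]; simp

lemma I_ke_aux {s : ℝ} (hs : 0 < s) {x : Pt} (hx : ‖x‖ < 1) (i : Fin 2)
    (h1 : IntegrableOn (fun p : Pt => (x - p) i / ((x - p) 0 ^ 2 + (x - p) 1 ^ 2)) (Metric.ball 0 (1 + s)))
    (h2 : ∫ p in Metric.ball (0:Pt) (1 + s), (x - p) i / ((x - p) 0 ^ 2 + (x - p) 1 ^ 2) = π * x i) :
    ∫ p in Metric.ball (0:Pt) (1 + s), ke s i (x - p) = π * x i := by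
  have h3 : ∫ p in Metric.ball (0:Pt) (1 + s), (ke s i (x - p) - (x - p) i / ((x - p) 0 ^ 2 + (x - p) 1 ^ 2)) = 0 := by
    rw [cpt_conv (s := s) (w := fun y => ke s i y - y i / (y 0 ^ 2 + y 1 ^ 2)) _ hx, odd_int]
    · intro y; simp [ke, tt_neg]; ring
    · intro y hy
      have h4 := (hh_out hs (tt_ge hs hy)).2.1
      have h5 : 0 < tt y := lt_of_lt_of_le (by positivity) (tt_ge hs hy)
      change ke s i y - y i / tt y = 0
      have h6 : hh s (tt y) ^ 2 = 1 / tt y := by field_simp; linarith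
      rw [ke, h6]; ring
  rw [integral_sub (ker_int (ke_meas s i) (ke_bd hs i) x _) h1, h2] at h3
  linarith

lemma I_ke {s : ℝ} (hs : 0 < s) {x : Pt} (hx : ‖x‖ < 1) (i : Fin 2) :
    ∫ p in Metric.ball (0:Pt) (1 + s), ke s i (x - p) = π * x i := by
  fin_cases i
  · exact I_ke_aux hs hx 0 (nw_int0 x _) (nw_val0 (by linarith))
  · exact I_ke_aux hs hx 1 (nw_int1 x _) (nw_val1 (by linarith))

lemma I_kG {s : ℝ} (hs : 0 < s) (hs1 : s ≤ 1) {x : Pt} (hx : ‖x‖ < 1) :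
    ∫ p in Metric.ball (0:Pt) (1 + s), kG s (x - p) ≤ 2 * π * (|Real.log s| + 4) := by
  set g1 : Pt → ℝ := (Metric.ball (0:Pt) s).indicator (fun _ => 9 / (2 * s ^ 2)) with hg1
  set g2 : Pt → ℝ := fun y => (Set.Icc s 3).indicator (fun y : ℝ => (y ^ 2)⁻¹) ‖y‖ with hg2
  have hg1i : Integrable g1 := by
    rw [hg1, integrable_indicator_iff measurableSet_ball]; exact integrable_const _
  have hg2i : Integrable g2 := by
    have : IntegrableOn g2 (Metric.ball 0 4) := by
      refine Integrable.of_bound (C := (s ^ 2)⁻¹) ?_ ?_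
      · apply Measurable.aestronglyMeasurable
        have : Measurable ((Set.Icc s 3).indicator (fun y : ℝ => (y ^ 2)⁻¹)) :=
          Measurable.indicator (by fun_prop) measurableSet_Icc
        exact this.comp measurable_norm
      · filter_upwards with y
        by_cases h : ‖y‖ ∈ Set.Icc s 3
        · have h1 : s ≤ ‖y‖ := h.1
          simp only [hg2, Set.indicator_of_mem h]
          rw [Real.norm_of_nonneg (by positivity)]
          gcongr
        · simp only [hg2, Set.indicator_of_notMem h]
          rw [norm_zero]; positivity
    rw [IntegrableOn, ← IntegrableOn, integrableOn_iff_integrable_of_support_subset] at this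
    · exact this
    · intro y hy
      by_contra h
      apply hy
      simp at h
      have : ‖y‖ ∉ Set.Icc s 3 := by intro h'; linarith [h'.2]
      simp only [hg2, Set.indicator_of_notMem this]
  have hle : ∀ y : Pt, ‖y‖ < 3 → kG s y ≤ g1 y + g2 y := by
    intro y hy
    by_cases h : ‖y‖ < s
    · have a : y ∈ Metric.ball (0:Pt) s := by simpa using h
      have b : ‖y‖ ∉ Set.Icc s 3 := by intro h'; linarith [h'.1]
      simp only [hg1, hg2, Set.indicator_of_mem a, Set.indicator_of_notMem b, add_zero]
      exact (kG_bd hs y).2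
    · push Not at h
      have a : y ∉ Metric.ball (0:Pt) s := by simpa using h
      have b : ‖y‖ ∈ Set.Icc s 3 := ⟨h, hy.le⟩
      simp only [hg1, hg2, Set.indicator_of_mem b, Set.indicator_of_notMem a, zero_add]
      obtain ⟨_, h4, h5⟩ := hh_out hs (tt_ge hs h)
      have h6 : 0 < tt y := lt_of_lt_of_le (by positivity) (tt_ge hs h)
      rw [kG, h5, ← tt_eq]
      have : hh s (tt y) ^ 2 = (tt y)⁻¹ := by field_simp; linarith
      rw [this]; simp
  have hgi : Integrable (fun y => g1 y + g2 y) := hg1i.add hg2i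
  have hnn : ∀ y, 0 ≤ g1 y + g2 y := by
    intro y
    apply add_nonneg
    · apply Set.indicator_nonneg; intros; positivity
    · apply Set.indicator_nonneg; intros; positivity
  have hgx : Integrable (fun p => g1 (x - p) + g2 (x - p)) := hgi.comp_sub_left x
  calc ∫ p in Metric.ball (0:Pt) (1 + s), kG s (x - p)
      ≤ ∫ p in Metric.ball (0:Pt) (1 + s), (g1 (x - p) + g2 (x - p)) := by
        apply setIntegral_mono_on
          (ker_int (kG_meas s) (fun y => by rw [abs_of_nonneg (kG_bd hs y).1]; exact (kG_bd hs y).2) x _)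
          hgx.integrableOn measurableSet_ball
        intro p hp
        apply hle
        simp at hp
        linarith [norm_sub_le x p]
    _ ≤ ∫ p, (g1 (x - p) + g2 (x - p)) := by
        apply setIntegral_le_integral hgx
        filter_upwards with p; exact hnn _
    _ = ∫ y, (g1 y + g2 y) := integral_sub_left_eq_self (fun y => g1 y + g2 y) volume x
    _ = π * s ^ 2 * (9 / (2 * s ^ 2)) + 2 * π * Real.log (3 / s) := by
        rw [integral_add hg1i hg2i]
        congr 1
        · rw [hg1, integral_indicator measurableSet_ball, setIntegral_const, pt_ball_vol 0 hs.le]; simp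
        · rw [← annulus_int hs (by linarith : s ≤ 3)]
          rw [radial_int, radial_int]
          congr 1
          apply setIntegral_congr_ae measurableSet_Ioi
          have : ∀ᵐ r : ℝ, r ≠ s := by simp [ae_iff]
          filter_upwards [this] with r h1 _
          congr 1
          by_cases h : r ∈ Set.Ioc s 3
          · rw [Set.indicator_of_mem h, Set.indicator_of_mem (Set.Ioc_subset_Icc_self h)]
          · rw [Set.indicator_of_notMem h, Set.indicator_of_notMem]
            intro h2
            exact h ⟨lt_of_le_of_ne h2.1 (Ne.symm h1), h2.2⟩
    _ ≤ 2 * π * (|Real.log s| + 4) := by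
        have e1 : π * s ^ 2 * (9 / (2 * s ^ 2)) = 2 * π * (9 / 4) := by field_simp; norm_num
        have e2 : Real.log (3 / s) = Real.log 3 + |Real.log s| := by
          rw [Real.log_div (by norm_num) hs.ne', abs_of_nonpos (Real.log_nonpos hs.le hs1)]; ring
        have e3 : Real.log 3 ≤ 1.7 := by
          rw [Real.log_le_iff_le_exp (by norm_num)]
          linarith [Real.add_one_le_exp (1.7:ℝ), Real.quadratic_le_exp_of_nonneg (show (0:ℝ) ≤ 1.7 by norm_num)]
        rw [e1, e2, ← mul_add]
        apply mul_le_mul_of_nonneg_left _ (by positivity)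
        linarith

lemma B1_open : IsOpen B1 := Metric.isOpen_ball

lemma B1_meas : MeasurableSet B1 := measurableSet_ball

lemma B1_norm {x : Pt} (hx : x ∈ B1) : ‖x‖ < 1 := by simpa [B1] using hx

instance B1Fin : IsFiniteMeasure (volume.restrict B1) := ballFin 1

lemma B1_vol : volume.real B1 = π := by
  rw [B1, pt_ball_vol 0 zero_le_one]; ring

lemma pd1_mul {f g : Pt → ℂ} {x : Pt} (hf : DifferentiableAt ℝ f x) (hg : DifferentiableAt ℝ g x) :
    pd1 (fun y => f y * g y) x = f x * pd1 g x + pd1 f x * g x := by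
  unfold pd1; rw [fderiv_fun_mul hf hg]; simp; ring

lemma pd2_mul {f g : Pt → ℂ} {x : Pt} (hf : DifferentiableAt ℝ f x) (hg : DifferentiableAt ℝ g x) :
    pd2 (fun y => f y * g y) x = f x * pd2 g x + pd2 f x * g x := by
  unfold pd2; rw [fderiv_fun_mul hf hg]; simp; ring

lemma pd1_const (c : ℂ) (x : Pt) : pd1 (fun _ => c) x = 0 := by simp [pd1]

lemma pd2_const (c : ℂ) (x : Pt) : pd2 (fun _ => c) x = 0 := by simp [pd2]

lemma pd1_meas (f : Pt → ℂ) : Measurable (pd1 f) := measurable_fderiv_apply_const ℝ f _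

lemma pd2_meas (f : Pt → ℂ) : Measurable (pd2 f) := measurable_fderiv_apply_const ℝ f _

/-- unnormalized admissibility -/
def pre (Ψ : Pt → ℂ) : Prop :=
  DifferentiableOn ℝ Ψ B1 ∧
  IntegrableOn (fun x => ‖Ψ x‖ ^ 2) B1 ∧
  IntegrableOn (fun x => ‖pd1 Ψ x‖ ^ 2 + ‖pd2 Ψ x‖ ^ 2) B1 ∧
  IntegrableOn (fun x => ‖Ψ x‖ ^ 4) B1

lemma gpAdm.pre {Ψ : Pt → ℂ} (h : gpAdm Ψ) : pre Ψ := ⟨h.1, h.2.1, h.2.2.1, h.2.2.2.1⟩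

lemma pre_diff {Ψ : Pt → ℂ} (h : pre Ψ) {x : Pt} (hx : x ∈ B1) : DifferentiableAt ℝ Ψ x :=
  h.1.differentiableAt (B1_open.mem_nhds hx)

lemma diff_aesm {Ψ : Pt → ℂ} (h : DifferentiableOn ℝ Ψ B1) :
    AEStronglyMeasurable Ψ (volume.restrict B1) := h.continuousOn.aestronglyMeasurable B1_meas

/-- the kinetic density -/
def hD (Ω : ℝ) (Ψ : Pt → ℂ) (x : Pt) : ℝ :=
  ‖pd1 Ψ x‖ ^ 2 + ‖pd2 Ψ x‖ ^ 2 - Ω * (starRingEnd ℂ (Ψ x) * angMom Ψ x).re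

lemma nsq (z : ℂ) : ‖z‖ ^ 2 = z.re ^ 2 + z.im ^ 2 := by
  rw [← Complex.normSq_eq_norm_sq, Complex.normSq_apply]; ring

lemma angRe (Ψ : Pt → ℂ) (x : Pt) : (starRingEnd ℂ (Ψ x) * angMom Ψ x).re =
    (Ψ x).re * (x 0 * (pd2 Ψ x).im - x 1 * (pd1 Ψ x).im)
    - (Ψ x).im * (x 0 * (pd2 Ψ x).re - x 1 * (pd1 Ψ x).re) := by
  rw [angMom]; simp; ring

lemma hD_lb (Ω : ℝ) (Ψ : Pt → ℂ) (x : Pt) : -(Ω ^ 2 / 4) * (‖x‖ ^ 2 * ‖Ψ x‖ ^ 2) ≤ hD Ω Ψ x := by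
  rw [hD, angRe, nsq, nsq, nsq, pt_normsq]
  generalize (Ψ x).re = u
  generalize (Ψ x).im = v
  generalize (pd1 Ψ x).re = a
  generalize (pd1 Ψ x).im = b
  generalize (pd2 Ψ x).re = c
  generalize (pd2 Ψ x).im = d
  generalize x 0 = X
  generalize x 1 = Y
  nlinarith [sq_nonneg (a - Ω / 2 * Y * v), sq_nonneg (b + Ω / 2 * Y * u),
    sq_nonneg (c + Ω / 2 * X * v), sq_nonneg (d - Ω / 2 * X * u)]

lemma ang_bd (Ψ : Pt → ℂ) {x : Pt} (hx : x ∈ B1) :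
    |(starRingEnd ℂ (Ψ x) * angMom Ψ x).re| ≤ ‖Ψ x‖ ^ 2 + (‖pd1 Ψ x‖ ^ 2 + ‖pd2 Ψ x‖ ^ 2) := by
  have h1 := hD_lb 2 Ψ x
  have h2 := hD_lb (-2) Ψ x
  rw [hD] at h1 h2
  have h3 : ‖x‖ ^ 2 * ‖Ψ x‖ ^ 2 ≤ ‖Ψ x‖ ^ 2 := by
    have := B1_norm hx
    apply mul_le_of_le_one_left (by positivity)
    exact pow_le_one₀ (norm_nonneg _) this.le
  have h4 : 0 ≤ ‖Ψ x‖ ^ 2 := by positivity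
  have h5 : 0 ≤ ‖pd1 Ψ x‖ ^ 2 + ‖pd2 Ψ x‖ ^ 2 := by positivity
  rw [abs_le]
  constructor <;> nlinarith

lemma ang_aesm {Ψ : Pt → ℂ} (h : DifferentiableOn ℝ Ψ B1) :
    AEStronglyMeasurable (fun x => (starRingEnd ℂ (Ψ x) * angMom Ψ x).re) (volume.restrict B1) := by
  have h1 := diff_aesm h
  have h2 : Measurable (angMom Ψ) := by
    have := pd1_meas Ψ
    have := pd2_meas Ψ
    unfold angMom
    fun_prop
  have h3 : AEStronglyMeasurable (fun x => (starRingEnd ℂ (Ψ x) * angMom Ψ x)) (volume.restrict B1) :=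
    (Complex.continuous_conj.comp_aestronglyMeasurable h1).mul h2.aestronglyMeasurable
  exact Complex.continuous_re.comp_aestronglyMeasurable h3

lemma pre_ang {Ψ : Pt → ℂ} (h : pre Ψ) :
    IntegrableOn (fun x => (starRingEnd ℂ (Ψ x) * angMom Ψ x).re) B1 := by
  refine Integrable.mono' (h.2.1.add h.2.2.1) (ang_aesm h.1) ?_
  filter_upwards [ae_restrict_mem B1_meas] with x hx
  exact ang_bd Ψ hx

lemma pre_hD {Ψ : Pt → ℂ} (h : pre Ψ) (Ω : ℝ) : IntegrableOn (hD Ω Ψ) B1 :=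
  h.2.2.1.sub ((pre_ang h).const_mul Ω)

lemma xsq_int {u : Pt → ℝ} (h : IntegrableOn u B1) : IntegrableOn (fun x => ‖x‖ ^ 2 * u x) B1 := by
  refine Integrable.mono h (AEStronglyMeasurable.mul (by fun_prop) h.aestronglyMeasurable) ?_
  filter_upwards [ae_restrict_mem B1_meas] with x hx
  rw [norm_mul]
  apply mul_le_of_le_one_left (norm_nonneg _)
  rw [Real.norm_of_nonneg (by positivity)]
  exact pow_le_one₀ (norm_nonneg _) (B1_norm hx).le

lemma energy_eq {Ψ : Pt → ℂ} (h : pre Ψ) (ε Ω : ℝ) :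
    gpEnergy ε Ω Ψ = (∫ x in B1, hD Ω Ψ x) + (∫ x in B1, ‖Ψ x‖ ^ 4) / ε ^ 2 := by
  rw [← integral_div, ← integral_add (pre_hD h Ω) (h.2.2.2.div_const _)]
  rfl

lemma hD_int_lb {Ψ : Pt → ℂ} (h : pre Ψ) (Ω : ℝ) :
    -(Ω ^ 2 / 4) * (∫ x in B1, ‖x‖ ^ 2 * ‖Ψ x‖ ^ 2) ≤ ∫ x in B1, hD Ω Ψ x := by
  rw [← integral_const_mul]
  exact integral_mono ((xsq_int h.2.1).const_mul _) (pre_hD h Ω) (fun x => hD_lb Ω Ψ x)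

lemma m_bd {Ψ : Pt → ℂ} (h : gpAdm Ψ) : 0 ≤ (∫ x in B1, ‖x‖ ^ 2 * ‖Ψ x‖ ^ 2) ∧
    (∫ x in B1, ‖x‖ ^ 2 * ‖Ψ x‖ ^ 2) ≤ 1 := by
  refine ⟨integral_nonneg (fun x => by positivity), ?_⟩
  rw [← h.2.2.2.2.2]
  refine setIntegral_mono_on (xsq_int h.2.1) h.2.1 B1_meas ?_
  intro x hx
  apply mul_le_of_le_one_left (by positivity)
  exact pow_le_one₀ (norm_nonneg _) (B1_norm hx).le

lemma energy_lb {Ψ : Pt → ℂ} (h : gpAdm Ψ) (ε Ω : ℝ) :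
    -(Ω ^ 2 / 4) + (∫ x in B1, ‖Ψ x‖ ^ 4) / ε ^ 2 ≤ gpEnergy ε Ω Ψ := by
  rw [energy_eq h.pre]
  have h1 := hD_int_lb h.pre Ω
  have h2 := (m_bd h).2
  have h3 : 0 ≤ Ω ^ 2 / 4 := by positivity
  nlinarith

lemma ground_le {Ψ : Pt → ℂ} (h : gpAdm Ψ) (ε Ω : ℝ) : gpGround ε Ω ≤ gpEnergy ε Ω Ψ := by
  apply csInf_le
  · refine ⟨-(Ω ^ 2 / 4), ?_⟩
    rintro E ⟨Φ, hΦ, rfl⟩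
    have h1 := energy_lb hΦ ε Ω
    have h2 : 0 ≤ (∫ x in B1, ‖Φ x‖ ^ 4) / ε ^ 2 := by
      apply div_nonneg _ (by positivity)
      exact integral_nonneg (fun x => by positivity)
    linarith
  · exact ⟨Ψ, h, rfl⟩

lemma scale_pd {Ψ : Pt → ℂ} (c : ℝ) {x : Pt} (hx : DifferentiableAt ℝ Ψ x) :
    pd1 (fun y => (c : ℂ) * Ψ y) x = c * pd1 Ψ x ∧ pd2 (fun y => (c : ℂ) * Ψ y) x = c * pd2 Ψ x := by
  rw [pd1_mul (by fun_prop) hx, pd2_mul (by fun_prop) hx, pd1_const, pd2_const]; simp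

lemma scale_hD {Ψ : Pt → ℂ} (c Ω : ℝ) {x : Pt} (hx : DifferentiableAt ℝ Ψ x) :
    hD Ω (fun y => (c : ℂ) * Ψ y) x = c ^ 2 * hD Ω Ψ x := by
  obtain ⟨h1, h2⟩ := scale_pd c hx
  have h3 := angRe (fun y => (c : ℂ) * Ψ y) x
  beta_reduce at h3
  rw [hD, hD, h3, angRe, h1, h2]
  simp only [nsq, Complex.mul_re, Complex.mul_im, Complex.ofReal_re, Complex.ofReal_im]
  ring

lemma scale_pre {Ψ : Pt → ℂ} (h : pre Ψ) (c : ℝ) : pre (fun y => (c : ℂ) * Ψ y) := by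
  refine ⟨h.1.const_mul _, ?_, ?_, ?_⟩
  · refine (h.2.1.const_mul (c ^ 2)).congr ?_
    filter_upwards with x; simp [mul_pow]
  · refine (h.2.2.1.const_mul (c ^ 2)).congr ?_
    filter_upwards [ae_restrict_mem B1_meas] with x hx
    obtain ⟨h1, h2⟩ := scale_pd c (pre_diff h hx)
    rw [h1, h2]; simp [mul_pow]; ring
  · refine (h.2.2.2.const_mul (c ^ 4)).congr ?_
    filter_upwards with x; simp only [norm_mul, mul_pow, Complex.norm_real]
    rw [Real.norm_eq_abs, Even.pow_abs (by decide)]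

lemma ground_le_scaled {Ψ : Pt → ℂ} (h : pre Ψ) (ε Ω N : ℝ) (hN : ∫ x in B1, ‖Ψ x‖ ^ 2 = N)
    (hN0 : 0 < N) :
    gpGround ε Ω * N ≤ (∫ x in B1, hD Ω Ψ x) + (∫ x in B1, ‖Ψ x‖ ^ 4) / ε ^ 2 / N := by
  set c := (√N)⁻¹ with hc
  have hc2 : c ^ 2 = N⁻¹ := by rw [hc, inv_pow, Real.sq_sqrt hN0.le]
  have hp := scale_pre h c
  have ha : gpAdm (fun y => (c : ℂ) * Ψ y) := by
    refine ⟨hp.1, hp.2.1, hp.2.2.1, hp.2.2.2, pre_ang hp, ?_⟩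
    have : ∀ x, ‖(c : ℂ) * Ψ x‖ ^ 2 = c ^ 2 * ‖Ψ x‖ ^ 2 := by intro x; simp [mul_pow]
    simp_rw [this]
    rw [integral_const_mul, hN, hc2, inv_mul_cancel₀ hN0.ne']
  have h1 := ground_le ha ε Ω
  rw [energy_eq hp] at h1
  have e1 : ∫ x in B1, hD Ω (fun y => (c : ℂ) * Ψ y) x = c ^ 2 * ∫ x in B1, hD Ω Ψ x := by
    rw [← integral_const_mul]
    exact setIntegral_congr_fun B1_meas (fun x hx => scale_hD c Ω (pre_diff h hx))
  have e2 : ∫ x in B1, ‖(c : ℂ) * Ψ x‖ ^ 4 = c ^ 4 * ∫ x in B1, ‖Ψ x‖ ^ 4 := by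
    rw [← integral_const_mul]
    congr 1; ext x; simp only [norm_mul, mul_pow, Complex.norm_real]
    rw [Real.norm_eq_abs, Even.pow_abs (by decide)]
  rw [e1, e2, show c ^ 4 = (c ^ 2) ^ 2 by ring, hc2] at h1
  calc gpGround ε Ω * N ≤ (N⁻¹ * (∫ x in B1, hD Ω Ψ x) + N⁻¹ ^ 2 * (∫ x in B1, ‖Ψ x‖ ^ 4) / ε ^ 2) * N := by
        gcongr
    _ = _ := by field_simp

/-- an off-centre vortex at `p` multiplied into `Φ` -/
def vp (s : ℝ) (p : Pt) (Φ : Pt → ℂ) (x : Pt) : ℂ := vph s (x - p) * Φ x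

lemma vsh_diff {s : ℝ} (hs : 0 < s) (p x : Pt) : DifferentiableAt ℝ (fun y => vph s (y - p)) x := by
  have h := (vph_fderiv hs (x - p)).1
  exact DifferentiableAt.comp (g := vph s) (f := fun y => y - p) x h (by fun_prop)

lemma vsh_pd (s : ℝ) (p x : Pt) : pd1 (fun y => vph s (y - p)) x = pd1 (vph s) (x - p) ∧
    pd2 (fun y => vph s (y - p)) x = pd2 (vph s) (x - p) := by
  unfold pd1 pd2
  rw [fderiv_comp_sub]
  exact ⟨rfl, rfl⟩

def R1 (Φ : Pt → ℂ) (x : Pt) : ℝ := (Φ x * starRingEnd ℂ (pd1 Φ x)).re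
def R2 (Φ : Pt → ℂ) (x : Pt) : ℝ := (Φ x * starRingEnd ℂ (pd2 Φ x)).re
def V1 (Ω : ℝ) (Φ : Pt → ℂ) (x : Pt) : ℝ :=
  -2 * (Φ x * starRingEnd ℂ (pd2 Φ x)).im - Ω * (x 0 * ‖Φ x‖ ^ 2)
def V2 (Ω : ℝ) (Φ : Pt → ℂ) (x : Pt) : ℝ :=
  2 * (Φ x * starRingEnd ℂ (pd1 Φ x)).im - Ω * (x 1 * ‖Φ x‖ ^ 2)

lemma vp_hD {s : ℝ} (hs : 0 < s) (Ω : ℝ) {Φ : Pt → ℂ} {x : Pt} (p : Pt)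
    (hx : DifferentiableAt ℝ Φ x) :
    hD Ω (vp s p Φ) x = k0 s (x - p) * hD Ω Φ x + kG s (x - p) * ‖Φ x‖ ^ 2
      + 2 * (ka s 0 (x - p) * R1 Φ x) + 2 * (ka s 1 (x - p) * R2 Φ x)
      + ke s 0 (x - p) * V1 Ω Φ x + ke s 1 (x - p) * V2 Ω Φ x := by
  obtain ⟨q1, q2⟩ := kae_eq hs (x - p)
  have q3 := kG_eq hs (x - p)
  have q4 := k0_eq s (x - p)
  have h1 : pd1 (vp s p Φ) x = vph s (x - p) * pd1 Φ x + pd1 (vph s) (x - p) * Φ x := by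
    rw [← (vsh_pd s p x).1]; exact pd1_mul (vsh_diff hs p x) hx
  have h2 : pd2 (vp s p Φ) x = vph s (x - p) * pd2 Φ x + pd2 (vph s) (x - p) * Φ x := by
    rw [← (vsh_pd s p x).2]; exact pd2_mul (vsh_diff hs p x) hx
  have a1 := congrArg Complex.re q1
  have a2 := congrArg Complex.im q1
  have a3 := congrArg Complex.re q2
  have a4 := congrArg Complex.im q2
  rw [hD, hD, angRe, angRe, h1, h2, vp, R1, R2, V1, V2]
  simp at a1 a2 a3 a4
  simp only [nsq, Complex.mul_re, Complex.mul_im, Complex.add_re, Complex.add_im,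
    Complex.conj_re, Complex.conj_im] at *
  have a5 : ke s 1 (x - p) = -((vph s (x - p)).re * (pd1 (vph s) (x - p)).im -
     (vph s (x - p)).im * (pd1 (vph s) (x - p)).re) := by linarith
  rw [a5, ← a1, ← a3, ← a4, ← q3, ← q4]
  ring

/-- convolution-type pairing -/
def GG (w u : Pt → ℝ) (p : Pt) : ℝ := ∫ x in B1, w (x - p) * u x

lemma GG_int {w u : Pt → ℝ} (hm : Measurable w) {c : ℝ} (hb : ∀ y, |w y| ≤ c)
    (hu : IntegrableOn u B1) (p : Pt) : IntegrableOn (fun x => w (x - p) * u x) B1 := by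
  refine Integrable.bdd_mul (c := c) hu ?_ ?_
  · exact (hm.comp (measurable_id.sub measurable_const)).aestronglyMeasurable
  · filter_upwards with x; exact hb _

lemma GG_prod {w u : Pt → ℝ} (hm : Measurable w) {c : ℝ} (hb : ∀ y, |w y| ≤ c)
    (hu : IntegrableOn u B1) (R : ℝ) : Integrable (fun z : Pt × Pt => w (z.2 - z.1) * u z.2)
      ((volume.restrict (Metric.ball (0:Pt) R)).prod (volume.restrict B1)) := by
  refine Integrable.bdd_mul (c := c) ?_ ?_ ?_
  · exact hu.comp_snd _
  · exact (hm.comp (measurable_snd.sub measurable_fst)).aestronglyMeasurable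
  · filter_upwards with x; exact hb _

lemma GG_i {w u : Pt → ℝ} (hm : Measurable w) {c : ℝ} (hb : ∀ y, |w y| ≤ c)
    (hu : IntegrableOn u B1) (R : ℝ) : IntegrableOn (GG w u) (Metric.ball (0:Pt) R) :=
  (GG_prod hm hb hu R).integral_prod_left

lemma GG_swap {w u : Pt → ℝ} (hm : Measurable w) {c : ℝ} (hb : ∀ y, |w y| ≤ c)
    (hu : IntegrableOn u B1) (R : ℝ) : ∫ p in Metric.ball (0:Pt) R, GG w u p
      = ∫ x in B1, (∫ p in Metric.ball (0:Pt) R, w (x - p)) * u x := by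
  unfold GG
  rw [integral_integral_swap (f := fun p x => w (x - p) * u x) (GG_prod hm hb hu R)]
  congr 1; ext x
  rw [integral_mul_const]

lemma GG_swap_i {w u : Pt → ℝ} (hm : Measurable w) {c : ℝ} (hb : ∀ y, |w y| ≤ c)
    (hu : IntegrableOn u B1) (R : ℝ) : 
      IntegrableOn (fun x => (∫ p in Metric.ball (0:Pt) R, w (x - p)) * u x) B1 := by
  have := (GG_prod hm hb hu R).integral_prod_right
  refine this.congr ?_
  filter_upwards with x
  rw [integral_mul_const]

lemma bm0 {s : ℝ} (hs : 0 < s) : ∀ y, |k0 s y| ≤ 1 := fun y => by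
  rw [abs_of_nonneg (k0_bd hs y).1]; exact (k0_bd hs y).2

lemma bmG {s : ℝ} (hs : 0 < s) : ∀ y, |kG s y| ≤ 9 / (2 * s ^ 2) := fun y => by
  rw [abs_of_nonneg (kG_bd hs y).1]; exact (kG_bd hs y).2

lemma cross_bd (a b : ℂ) : |(a * starRingEnd ℂ b).re| ≤ ‖a‖ ^ 2 + ‖b‖ ^ 2 ∧
    |(a * starRingEnd ℂ b).im| ≤ ‖a‖ ^ 2 + ‖b‖ ^ 2 := by
  have h : ‖a * starRingEnd ℂ b‖ ≤ ‖a‖ ^ 2 + ‖b‖ ^ 2 := by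
    rw [norm_mul, RCLike.norm_conj]; nlinarith [sq_nonneg (‖a‖ - ‖b‖), sq_nonneg (‖a‖ + ‖b‖)]
  exact ⟨(Complex.abs_re_le_norm _).trans h, (Complex.abs_im_le_norm _).trans h⟩

lemma cross_int {Φ : Pt → ℂ} (h : pre Φ) :
    IntegrableOn (fun x => (Φ x * starRingEnd ℂ (pd1 Φ x)).re) B1 ∧
    IntegrableOn (fun x => (Φ x * starRingEnd ℂ (pd2 Φ x)).re) B1 ∧
    IntegrableOn (fun x => (Φ x * starRingEnd ℂ (pd1 Φ x)).im) B1 ∧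
    IntegrableOn (fun x => (Φ x * starRingEnd ℂ (pd2 Φ x)).im) B1 := by
  have h1 := diff_aesm h.1
  have m1 : AEStronglyMeasurable (fun x => Φ x * starRingEnd ℂ (pd1 Φ x)) (volume.restrict B1) :=
    h1.mul (Complex.continuous_conj.comp_aestronglyMeasurable (pd1_meas Φ).aestronglyMeasurable)
  have m2 : AEStronglyMeasurable (fun x => Φ x * starRingEnd ℂ (pd2 Φ x)) (volume.restrict B1) :=
    h1.mul (Complex.continuous_conj.comp_aestronglyMeasurable (pd2_meas Φ).aestronglyMeasurable)
  refine ⟨?_, ?_, ?_, ?_⟩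
  · refine Integrable.mono' (h.2.1.add h.2.2.1) (Complex.continuous_re.comp_aestronglyMeasurable m1) ?_
    filter_upwards with x
    have := (cross_bd (Φ x) (pd1 Φ x)).1
    simp only [Pi.add_apply, Real.norm_eq_abs]
    nlinarith [sq_nonneg ‖pd2 Φ x‖]
  · refine Integrable.mono' (h.2.1.add h.2.2.1) (Complex.continuous_re.comp_aestronglyMeasurable m2) ?_
    filter_upwards with x
    have := (cross_bd (Φ x) (pd2 Φ x)).1
    simp only [Pi.add_apply, Real.norm_eq_abs]
    nlinarith [sq_nonneg ‖pd1 Φ x‖]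
  · refine Integrable.mono' (h.2.1.add h.2.2.1) (Complex.continuous_im.comp_aestronglyMeasurable m1) ?_
    filter_upwards with x
    have := (cross_bd (Φ x) (pd1 Φ x)).2
    simp only [Pi.add_apply, Real.norm_eq_abs]
    nlinarith [sq_nonneg ‖pd2 Φ x‖]
  · refine Integrable.mono' (h.2.1.add h.2.2.1) (Complex.continuous_im.comp_aestronglyMeasurable m2) ?_
    filter_upwards with x
    have := (cross_bd (Φ x) (pd2 Φ x)).2
    simp only [Pi.add_apply, Real.norm_eq_abs]
    nlinarith [sq_nonneg ‖pd1 Φ x‖]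

lemma xi_int {u : Pt → ℝ} (h : IntegrableOn u B1) (i : Fin 2) : IntegrableOn (fun x => x i * u x) B1 := by
  refine Integrable.mono h (AEStronglyMeasurable.mul (by fun_prop) h.aestronglyMeasurable) ?_
  filter_upwards [ae_restrict_mem B1_meas] with x hx
  rw [norm_mul]
  apply mul_le_of_le_one_left (norm_nonneg _)
  exact (PiLp.norm_apply_le x i).trans (B1_norm hx).le

lemma V1_int {Φ : Pt → ℂ} (h : pre Φ) (Ω : ℝ) : IntegrableOn (V1 Ω Φ) B1 :=
  ((cross_int h).2.2.2.const_mul _).sub ((xi_int h.2.1 0).const_mul _)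

lemma V2_int {Φ : Pt → ℂ} (h : pre Φ) (Ω : ℝ) : IntegrableOn (V2 Ω Φ) B1 :=
  ((cross_int h).2.2.1.const_mul _).sub ((xi_int h.2.1 1).const_mul _)

lemma vp_norm2 (s : ℝ) (p : Pt) (Φ : Pt → ℂ) (x : Pt) :
    ‖vp s p Φ x‖ ^ 2 = k0 s (x - p) * ‖Φ x‖ ^ 2 := by
  rw [vp, norm_mul, mul_pow, k0_eq]

lemma vp_norm4 {s : ℝ} (hs : 0 < s) (p : Pt) (Φ : Pt → ℂ) (x : Pt) :
    ‖vp s p Φ x‖ ^ 4 ≤ k0 s (x - p) * ‖Φ x‖ ^ 4 := by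
  rw [vp, norm_mul, mul_pow, show ‖vph s (x - p)‖ ^ 4 = (‖vph s (x - p)‖ ^ 2) ^ 2 by ring, k0_eq]
  obtain ⟨h1, h2⟩ := k0_bd hs (x - p)
  gcongr
  nlinarith

lemma int_add6 {μ : Measure Pt} {f1 f2 f3 f4 f5 f6 : Pt → ℝ} (i1 : Integrable f1 μ)
    (i2 : Integrable f2 μ) (i3 : Integrable f3 μ) (i4 : Integrable f4 μ) (i5 : Integrable f5 μ)
    (i6 : Integrable f6 μ) :
    Integrable (fun x => f1 x + f2 x + f3 x + f4 x + f5 x + f6 x) μ ∧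
    ∫ x, (f1 x + f2 x + f3 x + f4 x + f5 x + f6 x) ∂μ = ∫ x, f1 x ∂μ + ∫ x, f2 x ∂μ + ∫ x, f3 x ∂μ
      + ∫ x, f4 x ∂μ + ∫ x, f5 x ∂μ + ∫ x, f6 x ∂μ := by
  have j2 : Integrable (fun x => f1 x + f2 x) μ := i1.add i2
  have j3 : Integrable (fun x => f1 x + f2 x + f3 x) μ := j2.add i3
  have j4 : Integrable (fun x => f1 x + f2 x + f3 x + f4 x) μ := j3.add i4
  have j5 : Integrable (fun x => f1 x + f2 x + f3 x + f4 x + f5 x) μ := j4.add i5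
  refine ⟨j5.add i6, ?_⟩
  rw [integral_add j5 i6, integral_add j4 i5, integral_add j3 i4, integral_add j2 i3,
    integral_add i1 i2]

lemma vp_hD_i {s : ℝ} (hs : 0 < s) {Φ : Pt → ℂ} (h : pre Φ) (Ω : ℝ) (p : Pt) :
    IntegrableOn (hD Ω (vp s p Φ)) B1 ∧ ∫ x in B1, hD Ω (vp s p Φ) x =
      GG (k0 s) (hD Ω Φ) p + GG (kG s) (fun x => ‖Φ x‖ ^ 2) p + 2 * GG (ka s 0) (R1 Φ) p
      + 2 * GG (ka s 1) (R2 Φ) p + GG (ke s 0) (V1 Ω Φ) p + GG (ke s 1) (V2 Ω Φ) p := by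
  have i1 := GG_int (k0_meas s) (bm0 hs) (pre_hD h Ω) p
  have i2 := GG_int (kG_meas s) (bmG hs) h.2.1 p
  have i3 := (GG_int (ka_meas s 0) (ka_bd hs 0) (cross_int h).1 p).const_mul 2
  have i4 := (GG_int (ka_meas s 1) (ka_bd hs 1) (cross_int h).2.1 p).const_mul 2
  have i5 := GG_int (ke_meas s 0) (ke_bd hs 0) (V1_int h Ω) p
  have i6 := GG_int (ke_meas s 1) (ke_bd hs 1) (V2_int h Ω) p
  have j := int_add6 i1 i2 i3 i4 i5 i6
  constructor
  · refine IntegrableOn.congr_fun j.1 ?_ B1_meas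
    intro x hx
    rw [vp_hD hs Ω p (pre_diff h hx)]
    rfl
  · rw [setIntegral_congr_fun B1_meas (fun x hx => vp_hD hs Ω p (pre_diff h hx))]
    unfold GG
    rw [← integral_const_mul, ← integral_const_mul]
    exact j.2

lemma vp_pre {s : ℝ} (hs : 0 < s) {Φ : Pt → ℂ} (h : pre Φ) (p : Pt) : pre (vp s p Φ) := by
  have hd : DifferentiableOn ℝ (vp s p Φ) B1 := fun x hx =>
    ((vsh_diff hs p x).mul (pre_diff h hx)).differentiableWithinAt
  refine ⟨hd, ?_, ?_, ?_⟩
  · simp_rw [vp_norm2]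
    exact GG_int (k0_meas s) (bm0 hs) h.2.1 p
  · have := (vp_hD_i hs h 0 p).1
    unfold hD at this
    simpa using this
  · refine Integrable.mono' (GG_int (k0_meas s) (bm0 hs) h.2.2.2 p) ((diff_aesm hd).norm.pow 4) ?_
    filter_upwards with x
    rw [Real.norm_of_nonneg (by positivity)]
    exact vp_norm4 hs p Φ x

lemma nu_bd {s : ℝ} (hs : 0 < s) {Φ : Pt → ℂ} (h : gpAdm Φ)
    (hs2 : s * ((∫ x in B1, ‖Φ x‖ ^ 4) + π) ≤ 1) (p : Pt) :
    1 / 2 ≤ GG (k0 s) (fun x => ‖Φ x‖ ^ 2) p ∧ GG (k0 s) (fun x => ‖Φ x‖ ^ 2) p ≤ 1 := by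
  have i0 := GG_int (k0_meas s) (bm0 hs) h.2.1 p
  have e : 1 - GG (k0 s) (fun x => ‖Φ x‖ ^ 2) p = ∫ x in B1, (‖Φ x‖ ^ 2 - k0 s (x - p) * ‖Φ x‖ ^ 2) := by
    rw [integral_sub h.2.1 i0, h.2.2.2.2.2]; rfl
  set b : Pt → ℝ := (Metric.ball (0:Pt) s).indicator (fun _ => (1:ℝ)) with hb
  have hbi : Integrable b := by
    rw [hb, integrable_indicator_iff measurableSet_ball]
    exact integrable_const _
  have hbp : Integrable (fun x => b (x - p)) := hbi.comp_sub_right p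
  have hb0 : ∀ y, 0 ≤ b y := fun y => Set.indicator_nonneg (fun _ _ => zero_le_one) y
  have hb1 : ∀ y, b y ^ 2 = b y := by
    intro y
    by_cases hy : y ∈ Metric.ball (0:Pt) s
    · simp [hb, Set.indicator_of_mem hy]
    · simp [hb, Set.indicator_of_notMem hy]
  have hbv : ∫ x in B1, b (x - p) ≤ π * s ^ 2 := by
    calc ∫ x in B1, b (x - p) ≤ ∫ x, b (x - p) :=
          setIntegral_le_integral hbp (by filter_upwards with x; exact hb0 _)
      _ = ∫ x, b x := integral_sub_right_eq_self b p
      _ = π * s ^ 2 := by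
          rw [hb, integral_indicator measurableSet_ball, setIntegral_const, pt_ball_vol 0 hs.le]; simp
  have h1 : ∫ x in B1, (‖Φ x‖ ^ 2 - k0 s (x - p) * ‖Φ x‖ ^ 2) ≤
      ∫ x in B1, (s / 2 * ‖Φ x‖ ^ 4 + 1 / (2 * s) * b (x - p)) := by
    apply integral_mono (h.2.1.sub i0) ((h.2.2.2.1.const_mul _).add (hbp.integrableOn.const_mul _))
    intro x
    have q1 := one_sub_k0_le hs (x - p)
    have q2 : (1 - k0 s (x - p)) * ‖Φ x‖ ^ 2 ≤ b (x - p) * ‖Φ x‖ ^ 2 := by gcongr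
    have q3 : b (x - p) * ‖Φ x‖ ^ 2 ≤ s / 2 * ‖Φ x‖ ^ 4 + 1 / (2 * s) * b (x - p) := by
      rw [← hb1 (x - p)]
      have q4 : s / 2 * ‖Φ x‖ ^ 4 + 1 / (2 * s) * b (x - p) ^ 2 - b (x - p) * ‖Φ x‖ ^ 2
        = 1 / (2 * s) * (s * ‖Φ x‖ ^ 2 - b (x - p)) ^ 2 := by field_simp; ring
      have q5 : 0 ≤ 1 / (2 * s) * (s * ‖Φ x‖ ^ 2 - b (x - p)) ^ 2 := by positivity
      have q6 : b (x - p) ^ 2 * ‖Φ x‖ ^ 2 = b (x - p) * ‖Φ x‖ ^ 2 := by rw [hb1]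
      rw [q6]
      linarith
    simp only [Pi.add_apply, Pi.sub_apply]
    linarith
  rw [integral_add (h.2.2.2.1.const_mul _) (hbp.integrableOn.const_mul _), integral_const_mul,
    integral_const_mul] at h1
  have h2 : 1 / (2 * s) * ∫ x in B1, b (x - p) ≤ 1 / (2 * s) * (π * s ^ 2) := by gcongr
  have h3 : 1 / (2 * s) * (π * s ^ 2) = π * s / 2 := by field_simp
  constructor
  · linarith
  · have : 0 ≤ ∫ x in B1, (‖Φ x‖ ^ 2 - k0 s (x - p) * ‖Φ x‖ ^ 2) := by
      apply integral_nonneg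
      intro x
      have := (k0_bd hs (x - p)).2
      have h5 : k0 s (x - p) * ‖Φ x‖ ^ 2 ≤ ‖Φ x‖ ^ 2 := mul_le_of_le_one_left (by positivity) this
      simpa using h5
    linarith

lemma vortex_ptwise {s : ℝ} (hs : 0 < s) {Φ : Pt → ℂ} (h : gpAdm Φ)
    (hs2 : s * ((∫ x in B1, ‖Φ x‖ ^ 4) + π) ≤ 1) (ε Ω : ℝ) (p : Pt) :
    gpGround ε Ω * GG (k0 s) (fun x => ‖Φ x‖ ^ 2) p ≤ 
      (GG (k0 s) (hD Ω Φ) p + GG (kG s) (fun x => ‖Φ x‖ ^ 2) p + 2 * GG (ka s 0) (R1 Φ) p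
      + 2 * GG (ka s 1) (R2 Φ) p + GG (ke s 0) (V1 Ω Φ) p + GG (ke s 1) (V2 Ω Φ) p)
      + GG (k0 s) (fun x => ‖Φ x‖ ^ 4) p / ε ^ 2
      + 2 * ((∫ x in B1, ‖Φ x‖ ^ 4) / ε ^ 2) * (1 - GG (k0 s) (fun x => ‖Φ x‖ ^ 2) p) := by
  obtain ⟨n1, n2⟩ := nu_bd hs h hs2 p
  set N := GG (k0 s) (fun x => ‖Φ x‖ ^ 2) p with hN
  have hp := vp_pre hs h.pre p
  have g1 := ground_le_scaled hp ε Ω N (by simp_rw [vp_norm2]; rfl) (by linarith)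
  rw [(vp_hD_i hs h.pre Ω p).2] at g1
  have i4 := GG_int (k0_meas s) (bm0 hs) h.2.2.2.1 p
  have q1 : ∫ x in B1, ‖vp s p Φ x‖ ^ 4 ≤ GG (k0 s) (fun x => ‖Φ x‖ ^ 4) p :=
    integral_mono hp.2.2.2 i4 (fun x => vp_norm4 hs p Φ x)
  have q2 : GG (k0 s) (fun x => ‖Φ x‖ ^ 4) p ≤ ∫ x in B1, ‖Φ x‖ ^ 4 :=
    integral_mono i4 h.2.2.2.1
      (fun x => mul_le_of_le_one_left (by positivity) (k0_bd hs (x - p)).2)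
  have q0 : 0 ≤ ∫ x in B1, ‖vp s p Φ x‖ ^ 4 := integral_nonneg (fun x => by positivity)
  set a := ∫ x in B1, ‖vp s p Φ x‖ ^ 4
  set b := GG (k0 s) (fun x => ‖Φ x‖ ^ 4) p
  set c := ∫ x in B1, ‖Φ x‖ ^ 4
  have q3 : a / ε ^ 2 / N ≤ b / ε ^ 2 + 2 * (c / ε ^ 2) * (1 - N) := by
    have r1 : a / ε ^ 2 ≤ b / ε ^ 2 := by gcongr
    have r2 : b / ε ^ 2 ≤ c / ε ^ 2 := by gcongr
    have r0 : 0 ≤ a / ε ^ 2 := by positivity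
    rw [div_le_iff₀ (by linarith)]
    generalize a / ε ^ 2 = a' at *
    generalize b / ε ^ 2 = b' at *
    generalize c / ε ^ 2 = c' at *
    have r3 : 1 ≤ (1 + 2 * (1 - N)) * N := by nlinarith
    have r4 : (b' + 2 * b' * (1 - N)) * N ≤ (b' + 2 * c' * (1 - N)) * N := by
      apply mul_le_mul_of_nonneg_right _ (by linarith)
      nlinarith
    nlinarith
  linarith

lemma GG_k0_avg {s : ℝ} (hs : 0 < s) {u : Pt → ℝ} (hu : IntegrableOn u B1) :
    ∫ p in Metric.ball (0:Pt) (1 + s), GG (k0 s) u p = (π * (1 + s) ^ 2 - kap s) * ∫ x in B1, u x := by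
  rw [GG_swap (k0_meas s) (bm0 hs) hu, ← integral_const_mul]
  apply setIntegral_congr_fun B1_meas
  intro x hx
  simp only
  rw [I_k0 hs (B1_norm hx)]

lemma GG_ka_avg {s : ℝ} (hs : 0 < s) {u : Pt → ℝ} (hu : IntegrableOn u B1) (i : Fin 2) :
    ∫ p in Metric.ball (0:Pt) (1 + s), GG (ka s i) u p = 0 := by
  rw [GG_swap (ka_meas s i) (ka_bd hs i) hu]
  rw [← integral_zero Pt ℝ (μ := volume.restrict B1)]
  apply setIntegral_congr_fun B1_meas
  intro x hx
  simp only
  rw [I_ka hs (B1_norm hx), zero_mul]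

lemma GG_ke_avg {s : ℝ} (hs : 0 < s) {u : Pt → ℝ} (hu : IntegrableOn u B1) (i : Fin 2) :
    ∫ p in Metric.ball (0:Pt) (1 + s), GG (ke s i) u p = π * ∫ x in B1, x i * u x := by
  rw [GG_swap (ke_meas s i) (ke_bd hs i) hu, ← integral_const_mul]
  apply setIntegral_congr_fun B1_meas
  intro x hx
  simp only
  rw [I_ke hs (B1_norm hx)]; ring

lemma GG_kG_avg {s : ℝ} (hs : 0 < s) (hs1 : s ≤ 1) {u : Pt → ℝ} (hu : IntegrableOn u B1)
    (h0 : ∀ x, 0 ≤ u x) : ∫ p in Metric.ball (0:Pt) (1 + s), GG (kG s) u p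
      ≤ 2 * π * (|Real.log s| + 4) * ∫ x in B1, u x := by
  rw [GG_swap (kG_meas s) (bmG hs) hu, ← integral_const_mul]
  refine setIntegral_mono_on (GG_swap_i (kG_meas s) (bmG hs) hu _) (hu.const_mul _) B1_meas ?_
  intro x hx
  exact mul_le_mul_of_nonneg_right (I_kG hs hs1 (B1_norm hx)) (h0 x)

lemma xV {Φ : Pt → ℂ} (h : gpAdm Φ) (Ω k : ℝ) (hk : ∀ x ∈ B1, angMom Φ x = (k : ℂ) * Φ x) :
    (∫ x in B1, x 0 * V1 Ω Φ x) + (∫ x in B1, x 1 * V2 Ω Φ x)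
      = 2 * k - Ω * ∫ x in B1, ‖x‖ ^ 2 * ‖Φ x‖ ^ 2 := by
  rw [← integral_add (xi_int (V1_int h.pre Ω) 0) (xi_int (V2_int h.pre Ω) 1)]
  have : ∀ x ∈ B1, x 0 * V1 Ω Φ x + x 1 * V2 Ω Φ x
      = 2 * k * ‖Φ x‖ ^ 2 - Ω * (‖x‖ ^ 2 * ‖Φ x‖ ^ 2) := by
    intro x hx
    have h1 := angRe Φ x
    rw [hk x hx] at h1
    rw [V1, V2, pt_normsq, nsq]
    simp only [Complex.mul_re, Complex.mul_im, Complex.conj_re, Complex.conj_im, Complex.ofReal_re,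
      Complex.ofReal_im] at *
    linear_combination (-2) * h1
  rw [setIntegral_congr_fun B1_meas this, integral_sub (h.2.1.const_mul _)
    ((xsq_int h.2.1).const_mul _), integral_const_mul, integral_const_mul, h.2.2.2.2.2]
  ring

/-- Averaging a vortex over the disc. -/
lemma vortex_avg {s : ℝ} (hs : 0 < s) (hs1 : s ≤ 1) {Φ : Pt → ℂ} (h : gpAdm Φ)
    (hs2 : s * ((∫ x in B1, ‖Φ x‖ ^ 4) + π) ≤ 1) (ε Ω k : ℝ)
    (hk : ∀ x ∈ B1, angMom Φ x = (k : ℂ) * Φ x) :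
    (π * (1 + s) ^ 2 - kap s) * (gpGround ε Ω - gpEnergy ε Ω Φ) ≤
      2 * π * (|Real.log s| + 4) + π * (2 * k - Ω * ∫ x in B1, ‖x‖ ^ 2 * ‖Φ x‖ ^ 2)
      + 2 * ((∫ x in B1, ‖Φ x‖ ^ 4) / ε ^ 2) * kap s := by
  have hp := h.pre
  have a1 := GG_i (k0_meas s) (bm0 hs) (pre_hD hp Ω) (1 + s)
  have a2 := GG_i (kG_meas s) (bmG hs) hp.2.1 (1 + s)
  have a3 := GG_i (ka_meas s 0) (ka_bd hs 0) (cross_int hp).1 (1 + s)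
  have a4 := GG_i (ka_meas s 1) (ka_bd hs 1) (cross_int hp).2.1 (1 + s)
  have a5 := GG_i (ke_meas s 0) (ke_bd hs 0) (V1_int hp Ω) (1 + s)
  have a6 := GG_i (ke_meas s 1) (ke_bd hs 1) (V2_int hp Ω) (1 + s)
  have a7 := GG_i (k0_meas s) (bm0 hs) hp.2.2.2 (1 + s)
  have a8 := GG_i (k0_meas s) (bm0 hs) hp.2.1 (1 + s)
  obtain ⟨b1, b2⟩ := int_add6 a1 a2 (a3.const_mul 2) (a4.const_mul 2) a5 a6
  have c1 : IntegrableOn (fun p => 2 * ((∫ x in B1, ‖Φ x‖ ^ 4) / ε ^ 2) * (1 - GG (k0 s) (fun x => ‖Φ x‖ ^ 2) p))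
    (Metric.ball (0:Pt) (1 + s)) := ((integrable_const _).sub a8).const_mul _
  have key := integral_mono (a8.const_mul (gpGround ε Ω)) ((b1.add (a7.div_const (ε ^ 2))).add c1)
    (fun p => vortex_ptwise hs h hs2 ε Ω p)
  rw [integral_const_mul, GG_k0_avg hs hp.2.1] at key
  have e1 := integral_add (b1.add (a7.div_const (ε ^ 2))) c1
  have e2 := integral_add b1 (a7.div_const (ε ^ 2))
  simp only [Pi.add_apply] at e1 e2
  simp only [Pi.add_apply] at key
  rw [e1, e2, b2, integral_div, integral_const_mul, integral_const_mul, integral_const_mul,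
    integral_sub (integrable_const _) a8, GG_k0_avg hs hp.2.1, GG_k0_avg hs hp.2.2.2,
    GG_k0_avg hs (pre_hD hp Ω)] at key
  have t3 := GG_ka_avg hs (cross_int hp).1 0
  have t4 := GG_ka_avg hs (cross_int hp).2.1 1
  have t5 := GG_ke_avg hs (V1_int hp Ω) 0
  have t6 := GG_ke_avg hs (V2_int hp Ω) 1
  have t2 := GG_kG_avg hs hs1 hp.2.1 (fun x => by positivity)
  have t7 := xV h Ω k hk
  have t8 : ∫ p in Metric.ball (0:Pt) (1 + s), (1:ℝ) = π * (1 + s) ^ 2 := by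
    rw [setIntegral_const, pt_ball_vol 0 (by linarith)]; simp
  change ∫ p in Metric.ball (0:Pt) (1 + s), GG (ka s 0) (R1 Φ) p = 0 at t3
  change ∫ p in Metric.ball (0:Pt) (1 + s), GG (ka s 1) (R2 Φ) p = 0 at t4
  change _ * _ ≤ _ + _ + 2 * (∫ p in Metric.ball (0:Pt) (1 + s), GG (ka s 0) (R1 Φ) p) +
    2 * (∫ p in Metric.ball (0:Pt) (1 + s), GG (ka s 1) (R2 Φ) p) + _ + _ + _ + _ at key
  rw [t3, t4, t5, t6, t8, h.2.2.2.2.2] at key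
  rw [h.2.2.2.2.2] at t2
  have t9 : π * (∫ x in B1, x 0 * V1 Ω Φ x) + π * (∫ x in B1, x 1 * V2 Ω Φ x) =
    π * (2 * k - Ω * ∫ x in B1, ‖x‖ ^ 2 * ‖Φ x‖ ^ 2) := by rw [← t7]; ring
  rw [energy_eq hp]
  have t10 : (π * (1 + s) ^ 2 - kap s) * ((∫ x in B1, ‖Φ x‖ ^ 4)) / ε ^ 2 =
    (π * (1 + s) ^ 2 - kap s) * ((∫ x in B1, ‖Φ x‖ ^ 4) / ε ^ 2) := by ring
  rw [t10] at key
  nlinarith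

lemma ground_ub {ε : ℝ} (Ω : ℝ) : gpGround ε Ω ≤ 1 / (π * ε ^ 2) := by
  have hp : pre (fun _ => (1:ℂ)) := by
    refine ⟨differentiableOn_const _, ?_, ?_, ?_⟩
    · exact integrable_const _
    · simp only [pd1_const, pd2_const]; exact integrable_const _
    · exact integrable_const _
  have h := ground_le_scaled hp ε Ω π (by simp [B1_vol]) Real.pi_pos
  have e : ∀ x, hD Ω (fun _ => (1:ℂ)) x = 0 := by
    intro x; simp [hD, angMom, pd1_const, pd2_const]
  simp [e, B1_vol] at h
  have h2 : gpGround ε Ω ≤ π / ε ^ 2 / π / π := by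
    rw [le_div_iff₀ Real.pi_pos]; simpa using h
  refine h2.trans (le_of_eq ?_)
  have := Real.pi_pos.ne'
  by_cases h0 : ε = 0
  · simp [h0]
  · field_simp

lemma min_quartic {ε Ω : ℝ} (hε : 0 < ε) {Ψ : Pt → ℂ} (h : IsGPMinimizer ε Ω Ψ) :
    ∫ x in B1, ‖Ψ x‖ ^ 4 ≤ 1 / π + Ω ^ 2 * ε ^ 2 / 4 := by
  have h1 := energy_lb h.1 ε Ω
  rw [h.2] at h1
  have h2 := ground_ub (ε := ε) Ω
  have h3 : (∫ x in B1, ‖Ψ x‖ ^ 4) / ε ^ 2 ≤ 1 / (π * ε ^ 2) + Ω ^ 2 / 4 := by linarith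
  rw [div_le_iff₀ (by positivity)] at h3
  refine h3.trans (le_of_eq ?_)
  field_simp

/-- rotation by a right angle -/
def JJ : Pt →L[ℝ] Pt :=
  (EuclideanSpace.proj 0 : Pt →L[ℝ] ℝ).smulRight (EuclideanSpace.single 1 1)
  - (EuclideanSpace.proj 1 : Pt →L[ℝ] ℝ).smulRight (EuclideanSpace.single 0 1)

lemma JJ_0 (x : Pt) : JJ x 0 = - x 1 := by simp [JJ]

lemma JJ_1 (x : Pt) : JJ x 1 = x 0 := by simp [JJ]

lemma JJ_JJ (x : Pt) : JJ (JJ x) = - x := by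
  ext i
  fin_cases i
  · simp [JJ_0, JJ_1]
  · simp [JJ_0, JJ_1]

/-- rotation -/
def rot (θ : ℝ) : Pt →L[ℝ] Pt := Real.cos θ • ContinuousLinearMap.id ℝ Pt + Real.sin θ • JJ

lemma rot_apply (θ : ℝ) (x : Pt) : rot θ x = Real.cos θ • x + Real.sin θ • JJ x := rfl

lemma rot_norm (θ : ℝ) (x : Pt) : ‖rot θ x‖ = ‖x‖ := by
  have : ‖rot θ x‖ ^ 2 = ‖x‖ ^ 2 := by
    rw [pt_normsq, pt_normsq, rot_apply]
    simp [JJ_0, JJ_1]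
    linear_combination (x 0 ^ 2 + x 1 ^ 2) * Real.sin_sq_add_cos_sq θ
  exact (sq_eq_sq₀ (norm_nonneg _) (norm_nonneg _)).1 this

lemma ang_JJ (Ψ : Pt → ℂ) (x : Pt) : fderiv ℝ Ψ x (JJ x) = Complex.I * angMom Ψ x := by
  have : JJ x = x 0 • (EuclideanSpace.single 1 1 : Pt) - x 1 • (EuclideanSpace.single 0 1 : Pt) := by
    simp [JJ]
  rw [this, map_sub, map_smul, map_smul, angMom, pd1, pd2]
  simp only [Complex.real_smul]
  linear_combination ((x 0 : ℂ) * fderiv ℝ Ψ x (EuclideanSpace.single 1 1) -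
    (x 1 : ℂ) * fderiv ℝ Ψ x (EuclideanSpace.single 0 1)) * Complex.I_mul_I

lemma rot_eig {Ψ : Pt → ℂ} (h : DifferentiableOn ℝ Ψ B1) (n : ℤ)
    (hn : ∀ x ∈ B1, angMom Ψ x = (n : ℂ) * Ψ x) {x : Pt} (hx : x ∈ B1) (θ : ℝ) :
    Ψ (rot θ x) = Complex.exp (Complex.I * n * θ) * Ψ x := by
  set g : ℝ → ℂ := fun t => Complex.exp (-(Complex.I * n * t)) * Ψ (rot t x) with hg
  have hd : ∀ t, HasDerivAt g 0 t := by
    intro t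
    have hm : rot t x ∈ B1 := by
      have := B1_norm hx
      simp [B1, rot_norm, this]
    have h1 : HasDerivAt (fun t => rot t x) (JJ (rot t x)) t := by
      have : JJ (rot t x) = (-Real.sin t) • x + Real.cos t • JJ x := by
        rw [rot_apply, map_add, map_smul, map_smul, JJ_JJ]; module
      rw [this]
      exact ((Real.hasDerivAt_cos t).smul_const x).add ((Real.hasDerivAt_sin t).smul_const (JJ x))
    have h2 : HasDerivAt (fun t => Ψ (rot t x)) (Complex.I * ((n : ℂ) * Ψ (rot t x))) t := by
      have := (h.differentiableAt (B1_open.mem_nhds hm)).hasFDerivAt.comp_hasDerivAt t h1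
      rw [ang_JJ, hn _ hm] at this
      exact this
    have h3 : HasDerivAt (fun t : ℝ => Complex.exp (-(Complex.I * n * t)))
        (Complex.exp (-(Complex.I * n * t)) * (-(Complex.I * n * 1))) t := by
      have : HasDerivAt (fun t : ℝ => (t : ℂ)) 1 t := Complex.ofRealCLM.hasDerivAt
      exact ((this.const_mul _).neg).cexp
    have h4 := h3.mul h2
    refine h4.congr_deriv ?_
    ring
  have hc := is_const_of_deriv_eq_zero (fun t => (hd t).differentiableAt) (fun t => (hd t).deriv) θ 0
  simp only [hg] at hc
  have r0 : rot 0 x = x := by simp [rot_apply]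
  rw [r0] at hc
  simp at hc
  rw [← hc, ← mul_assoc, ← Complex.exp_add]
  simp

lemma eig_fderiv0 {Ψ : Pt → ℂ} (h : DifferentiableOn ℝ Ψ B1) (n : ℤ) (h2 : 2 ≤ n)
    (hn : ∀ x ∈ B1, angMom Ψ x = (n : ℂ) * Ψ x) : Ψ 0 = 0 ∧ HasFDerivAt Ψ (0 : Pt →L[ℝ] ℂ) 0 := by
  have h0 : (0:Pt) ∈ B1 := by simp [B1]
  have hz : Ψ 0 = 0 := by
    have := hn 0 h0
    simp [angMom] at this
    rcases this with h | h
    · omega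
    · exact h
  refine ⟨hz, ?_⟩
  have hA := (h.differentiableAt (B1_open.mem_nhds h0)).hasFDerivAt
  set A := fderiv ℝ Ψ 0 with hAdef
  have key : ∀ θ v, A (rot θ v) = Complex.exp (Complex.I * n * θ) * A v := by
    intro θ v
    have e1 : HasFDerivAt (fun x => Ψ (rot θ x)) (A.comp (rot θ)) 0 := by
      have hA' : HasFDerivAt Ψ A (rot θ 0) := by rw [map_zero]; exact hA
      exact hA'.comp 0 (rot θ).hasFDerivAt
    have e2 : HasFDerivAt (fun x => Ψ (rot θ x)) (Complex.exp (Complex.I * n * θ) • A) 0 := by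
      refine (hA.const_smul (Complex.exp (Complex.I * n * θ))).congr_of_eventuallyEq ?_
      filter_upwards [B1_open.mem_nhds h0] with x hx
      rw [rot_eig h n hn hx]; rfl
    have e3 := e1.unique e2
    have := congrArg (fun L : Pt →L[ℝ] ℂ => L v) e3
    simpa using this
  have hA0 : A = 0 := by
    ext v
    have hnr : (2:ℝ) ≤ n := by exact_mod_cast h2
    have a1 := key (π / n) v
    have a2 := key (-(π / n)) v
    have b1 : Complex.exp (Complex.I * n * ((π / n : ℝ) : ℂ)) = -1 := by
      rw [← Complex.exp_pi_mul_I]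
      congr 1
      have : (n : ℂ) ≠ 0 := by exact_mod_cast (by omega : n ≠ 0)
      push_cast
      field_simp
    have b2 : Complex.exp (Complex.I * n * ((-(π / n) : ℝ) : ℂ)) = -1 := by
      have : Complex.I * n * ((-(π / n) : ℝ) : ℂ) = -(Complex.I * n * ((π / n : ℝ) : ℂ)) := by
        push_cast; ring
      rw [this, Complex.exp_neg, b1]; norm_num
    rw [b1] at a1
    rw [b2] at a2
    have a3 : A (rot (π / n) v) + A (rot (-(π / n)) v) = (2 * Real.cos (π / n) : ℝ) • A v := by
      rw [← map_add, ← map_smul]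
      congr 1
      rw [rot_apply, rot_apply, Real.cos_neg, Real.sin_neg]
      module
    rw [a1, a2] at a3
    have c1 : -1 < Real.cos (π / n) := by
      rw [← Real.cos_pi]
      apply Real.cos_lt_cos_of_nonneg_of_le_pi (by positivity) le_rfl
      apply div_lt_self Real.pi_pos; linarith
    have c2 : ((2 * Real.cos (π / n) + 2 : ℝ) : ℂ) * A v = 0 := by
      rw [Complex.real_smul] at a3
      push_cast at *
      linear_combination -a3
    rcases mul_eq_zero.1 c2 with h | h
    · exfalso
      rw [Complex.ofReal_eq_zero] at h
      linarith
    · simpa using h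
  rw [← hA0]; exact hA

/-- remove one unit of winding -/
def dw (Ψ : Pt → ℂ) (x : Pt) : ℂ := starRingEnd ℂ (zc x) * ((‖x‖⁻¹ : ℝ) : ℂ) * Ψ x

lemma vph_out {s : ℝ} (hs : 0 < s) {y : Pt} (h : s ≤ ‖y‖) : vph s y = ((‖y‖⁻¹ : ℝ) : ℂ) * zc y := by
  rw [vph, (hh_out hs (tt_ge hs h)).1, tt_eq, Real.sqrt_sq (norm_nonneg _)]

lemma dw_norm {Ψ : Pt → ℂ} (h0 : Ψ 0 = 0) (x : Pt) : ‖dw Ψ x‖ = ‖Ψ x‖ := by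
  by_cases hx : x = 0
  · rw [hx, dw, h0]; simp
  · have : ‖x‖ ≠ 0 := by simpa using hx
    rw [dw, norm_mul, norm_mul, RCLike.norm_conj, norm_zc]
    simp [this]

lemma dw_loc {Ψ : Pt → ℂ} {x : Pt} (hx : x ≠ 0) :
    dw Ψ =ᶠ[nhds x] fun y => starRingEnd ℂ (vph (‖x‖ / 2) y) * Ψ y := by
  have h0 : 0 < ‖x‖ := by simpa using hx
  have : ∀ᶠ y in nhds x, ‖x‖ / 2 < ‖y‖ :=
    continuous_norm.continuousAt.eventually_const_lt (by linarith)
  filter_upwards [this] with y hy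
  rw [vph_out (by linarith) hy.le, dw]
  simp
  left; ring

lemma conj_pd {f : Pt → ℂ} {x : Pt} (hf : DifferentiableAt ℝ f x) :
    DifferentiableAt ℝ (fun y => starRingEnd ℂ (f y)) x ∧
    pd1 (fun y => starRingEnd ℂ (f y)) x = starRingEnd ℂ (pd1 f x) ∧
    pd2 (fun y => starRingEnd ℂ (f y)) x = starRingEnd ℂ (pd2 f x) := by
  have h : HasFDerivAt (fun y => starRingEnd ℂ (f y))
    ((Complex.conjCLE : ℂ →L[ℝ] ℂ).comp (fderiv ℝ f x)) x :=
    (Complex.conjCLE : ℂ →L[ℝ] ℂ).hasFDerivAt.comp x hf.hasFDerivAt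
  refine ⟨h.differentiableAt, ?_, ?_⟩
  · rw [pd1, h.fderiv]; simp [pd1]
  · rw [pd2, h.fderiv]; simp [pd2]

lemma pd1_congr {f g : Pt → ℂ} {x : Pt} (h : f =ᶠ[nhds x] g) : pd1 f x = pd1 g x := by
  rw [pd1, pd1, h.fderiv_eq]

lemma pd2_congr {f g : Pt → ℂ} {x : Pt} (h : f =ᶠ[nhds x] g) : pd2 f x = pd2 g x := by
  rw [pd2, pd2, h.fderiv_eq]

lemma dw_pd {Ψ : Pt → ℂ} {x : Pt} (hx : x ≠ 0) (hd : DifferentiableAt ℝ Ψ x) :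
    DifferentiableAt ℝ (dw Ψ) x ∧
    pd1 (dw Ψ) x = starRingEnd ℂ (vph (‖x‖ / 2) x) * pd1 Ψ x
      + starRingEnd ℂ (pd1 (vph (‖x‖ / 2)) x) * Ψ x ∧
    pd2 (dw Ψ) x = starRingEnd ℂ (vph (‖x‖ / 2) x) * pd2 Ψ x
      + starRingEnd ℂ (pd2 (vph (‖x‖ / 2)) x) * Ψ x := by
  have h0 : 0 < ‖x‖ := by simpa using hx
  obtain ⟨c1, c2, c3⟩ := conj_pd (vph_fderiv (by linarith : 0 < ‖x‖ / 2) x).1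
  have hl := dw_loc (Ψ := Ψ) hx
  refine ⟨(c1.mul hd).congr_of_eventuallyEq hl, ?_, ?_⟩
  · rw [pd1_congr hl, pd1_mul c1 hd, c2]
  · rw [pd2_congr hl, pd2_mul c1 hd, c3]

lemma dw_ang {Ψ : Pt → ℂ} {n : ℤ} {x : Pt} (hd : DifferentiableAt ℝ Ψ x)
    (hn : angMom Ψ x = (n : ℂ) * Ψ x) : angMom (dw Ψ) x = ((n - 1 : ℤ) : ℂ) * dw Ψ x := by
  by_cases hx : x = 0
  · rw [hx]; simp [angMom, dw]
  · have h0 : 0 < ‖x‖ := by simpa using hx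
    obtain ⟨_, c2, c3⟩ := dw_pd hx hd
    obtain ⟨_, v1, v2⟩ := vph_fderiv (by linarith : 0 < ‖x‖ / 2) x
    have e0 : dw Ψ x = starRingEnd ℂ (vph (‖x‖ / 2) x) * Ψ x := (dw_loc hx).eq_of_nhds
    have e1 : (x 0 : ℂ) * starRingEnd ℂ (pd2 (vph (‖x‖ / 2)) x)
        - (x 1 : ℂ) * starRingEnd ℂ (pd1 (vph (‖x‖ / 2)) x)
        = - Complex.I * starRingEnd ℂ (vph (‖x‖ / 2) x) := by
      rw [v1, v2, vph]
      apply Complex.ext <;> simp [zc] <;> ring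
    rw [angMom] at hn
    rw [angMom, c2, c3, e0]
    push_cast
    linear_combination (starRingEnd ℂ (vph (‖x‖ / 2) x)) * hn - Complex.I * Ψ x * e1
      + (starRingEnd ℂ (vph (‖x‖ / 2) x)) * Ψ x * Complex.I_mul_I

lemma dw_grad {Ψ : Pt → ℂ} {n : ℤ} {x : Pt} (hx : x ≠ 0) (hd : DifferentiableAt ℝ Ψ x)
    (hn : angMom Ψ x = (n : ℂ) * Ψ x) :
    ‖pd1 (dw Ψ) x‖ ^ 2 + ‖pd2 (dw Ψ) x‖ ^ 2 = ‖pd1 Ψ x‖ ^ 2 + ‖pd2 Ψ x‖ ^ 2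
      - (2 * n - 1) * (‖Ψ x‖ ^ 2 / ‖x‖ ^ 2) := by
  have h0 : 0 < ‖x‖ := by simpa using hx
  have hs : 0 < ‖x‖ / 2 := by linarith
  obtain ⟨_, c2, c3⟩ := dw_pd hx hd
  obtain ⟨q1, q2⟩ := kae_eq hs x
  have q3 := kG_eq hs x
  have q4 := k0_eq (‖x‖ / 2) x
  obtain ⟨r1, r2, r3⟩ := hh_out hs (tt_ge hs (by linarith : ‖x‖ / 2 ≤ ‖x‖))
  have hT : 0 < tt x := by rw [tt_eq]; positivity
  have r4 : hh (‖x‖ / 2) (tt x) ^ 2 = 1 / tt x := by field_simp; linarith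
  have ha : ∀ i, ka (‖x‖ / 2) i x = 0 := by intro i; rw [ka, r3]; ring
  have he : ∀ i, ke (‖x‖ / 2) i x = x i / tt x := by intro i; rw [ke, r4]; ring
  have hk : k0 (‖x‖ / 2) x = 1 := by rw [k0, r2]
  have hG : kG (‖x‖ / 2) x = 1 / tt x := by rw [kG, r3, r4]; ring
  have a1 := congrArg Complex.re q1
  have a2 := congrArg Complex.im q1
  have a3 := congrArg Complex.re q2
  have a4 := congrArg Complex.im q2
  rw [ha, he] at a1 a2 a3 a4
  rw [hG] at q3
  rw [hk] at q4
  have hn2 := angRe Ψ x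
  rw [hn] at hn2
  rw [c2, c3, ← tt_eq]
  simp at a1 a2 a3 a4
  have hn3 : ((starRingEnd ℂ) (Ψ x) * ((n : ℂ) * Ψ x)).re = n * ((Ψ x).re ^ 2 + (Ψ x).im ^ 2) := by
    simp; ring
  rw [hn3] at hn2
  simp only [nsq, Complex.mul_re, Complex.mul_im, Complex.add_re, Complex.add_im,
    Complex.conj_re, Complex.conj_im] at *
  generalize (Ψ x).re = u at *
  generalize (Ψ x).im = v at *
  generalize (pd1 Ψ x).re = p at *
  generalize (pd1 Ψ x).im = q at *
  generalize (pd2 Ψ x).re = r at *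
  generalize (pd2 Ψ x).im = t at *
  generalize (vph (‖x‖ / 2) x).re = f at *
  generalize (vph (‖x‖ / 2) x).im = g at *
  generalize (pd1 (vph (‖x‖ / 2)) x).re = f1 at *
  generalize (pd1 (vph (‖x‖ / 2)) x).im = g1 at *
  generalize (pd2 (vph (‖x‖ / 2)) x).re = f2 at *
  generalize (pd2 (vph (‖x‖ / 2)) x).im = g2 at *
  have e1 : x 1 / tt x = -(f * g1 - g * f1) := by linarith
  have e0 : x 0 / tt x = f * g2 - g * f2 := by linarith
  have e5 : (n * (u ^ 2 + v ^ 2)) / tt x = u * (x 0 / tt x * t - x 1 / tt x * q)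
    - v * (x 0 / tt x * r - x 1 / tt x * p) := by rw [hn2]; ring
  rw [e0, e1] at e5
  have e6 : (2 * n - 1) * ((u ^ 2 + v ^ 2) / tt x) = 2 * ((n * (u ^ 2 + v ^ 2)) / tt x)
    - (u ^ 2 + v ^ 2) * (1 / tt x) := by ring
  rw [e6, e5, ← q3]
  linear_combination (p ^ 2 + q ^ 2 + r ^ 2 + t ^ 2) * q4 + 2 * (u * p + v * q) * a1 + 2 * (u * r + v * t) * a3

lemma g_bd {Ψ : Pt → ℂ} {n : ℤ} (h2 : 2 ≤ n) {x : Pt} (h0 : Ψ 0 = 0)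
    (hn : angMom Ψ x = (n : ℂ) * Ψ x) :
    ‖Ψ x‖ ^ 2 / ‖x‖ ^ 2 ≤ ‖pd1 Ψ x‖ ^ 2 + ‖pd2 Ψ x‖ ^ 2 := by
  by_cases hx : x = 0
  · rw [hx, h0]; simp; positivity
  have hp : 0 < ‖x‖ := by simpa using hx
  rw [div_le_iff₀ (by positivity)]
  have hnr : (2:ℝ) ≤ n := by exact_mod_cast h2
  have e : ‖angMom Ψ x‖ ^ 2 = (n : ℝ) ^ 2 * ‖Ψ x‖ ^ 2 := by
    rw [hn, norm_mul, mul_pow]; simp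
  have e2 : ‖angMom Ψ x‖ ^ 2 ≤ (‖pd1 Ψ x‖ ^ 2 + ‖pd2 Ψ x‖ ^ 2) * ‖x‖ ^ 2 := by
    rw [angMom, pt_normsq, norm_mul]
    simp only [norm_neg, Complex.norm_I, one_mul, nsq, Complex.sub_re, Complex.sub_im,
      Complex.mul_re, Complex.mul_im, Complex.ofReal_re, Complex.ofReal_im]
    nlinarith [sq_nonneg (x 0 * (pd1 Ψ x).re + x 1 * (pd2 Ψ x).re),
      sq_nonneg (x 0 * (pd1 Ψ x).im + x 1 * (pd2 Ψ x).im)]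
  have : (1:ℝ) ≤ (n:ℝ) ^ 2 := by nlinarith
  nlinarith [sq_nonneg ‖Ψ x‖]

lemma g_int {Ψ : Pt → ℂ} (h : pre Ψ) {n : ℤ} (h2 : 2 ≤ n)
    (hn : ∀ x ∈ B1, angMom Ψ x = (n : ℂ) * Ψ x) :
    IntegrableOn (fun x => ‖Ψ x‖ ^ 2 / ‖x‖ ^ 2) B1 := by
  have h0 := (eig_fderiv0 h.1 n h2 hn).1
  refine Integrable.mono' h.2.2.1 ?_ ?_
  · simp_rw [div_eq_mul_inv]
    exact ((diff_aesm h.1).norm.pow 2).mul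
      (by fun_prop : Measurable (fun x : Pt => (‖x‖ ^ 2)⁻¹)).aestronglyMeasurable
  · filter_upwards [ae_restrict_mem B1_meas] with x hx
    rw [Real.norm_of_nonneg (by positivity)]
    exact g_bd h2 h0 (hn x hx)

lemma ae_ne0 : ∀ᵐ x ∂(volume.restrict B1), x ≠ (0:Pt) := by
  apply ae_restrict_of_ae
  simp [ae_iff]

lemma dw_main {Ψ : Pt → ℂ} (h : gpAdm Ψ) {n : ℤ} (h2 : 2 ≤ n)
    (hn : ∀ x ∈ B1, angMom Ψ x = (n : ℂ) * Ψ x) (ε Ω : ℝ) :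
    gpAdm (dw Ψ) ∧ gpEnergy ε Ω (dw Ψ) = gpEnergy ε Ω Ψ
      - (2 * n - 1) * (∫ x in B1, ‖Ψ x‖ ^ 2 / ‖x‖ ^ 2) + Ω := by
  obtain ⟨h0, hf0⟩ := eig_fderiv0 h.1 n h2 hn
  have hg := g_int h.pre h2 hn
  have hd : DifferentiableOn ℝ (dw Ψ) B1 := by
    intro x hx
    apply DifferentiableAt.differentiableWithinAt
    by_cases hx0 : x = 0
    · rw [hx0]
      have : HasFDerivAt (dw Ψ) (0 : Pt →L[ℝ] ℂ) 0 := by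
        rw [hasFDerivAt_iff_isLittleO_nhds_zero] at hf0 ⊢
        have e0 : dw Ψ 0 = 0 := by simp [dw]
        simp only [h0, e0, zero_add, sub_zero, _root_.zero_apply] at hf0 ⊢
        exact (Asymptotics.isLittleO_norm_left).1 
          ((Asymptotics.isLittleO_norm_left.2 hf0).congr_left (fun x => (dw_norm h0 x).symm))
      exact this.differentiableAt
    · exact (dw_pd hx0 (pre_diff h.pre hx)).1
  have hgr : ∀ᵐ x ∂(volume.restrict B1), ‖pd1 Ψ x‖ ^ 2 + ‖pd2 Ψ x‖ ^ 2
      - (2 * n - 1) * (‖Ψ x‖ ^ 2 / ‖x‖ ^ 2) = ‖pd1 (dw Ψ) x‖ ^ 2 + ‖pd2 (dw Ψ) x‖ ^ 2 := by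
    filter_upwards [ae_restrict_mem B1_meas, ae_ne0] with x hx hx0
    exact (dw_grad hx0 (pre_diff h.pre hx) (hn x hx)).symm
  have hgi : IntegrableOn (fun x => ‖pd1 (dw Ψ) x‖ ^ 2 + ‖pd2 (dw Ψ) x‖ ^ 2) B1 :=
    (h.2.2.1.sub (hg.const_mul _)).congr hgr
  have hp : pre (dw Ψ) := by
    refine ⟨hd, ?_, hgi, ?_⟩
    · simp_rw [dw_norm h0]; exact h.2.1
    · simp_rw [dw_norm h0]; exact h.2.2.2.1
  refine ⟨⟨hp.1, hp.2.1, hp.2.2.1, hp.2.2.2, pre_ang hp, ?_⟩, ?_⟩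
  · simp_rw [dw_norm h0]; exact h.2.2.2.2.2
  · rw [energy_eq hp, energy_eq h.pre]
    simp_rw [dw_norm h0]
    have : ∫ x in B1, hD Ω (dw Ψ) x = ∫ x in B1, (hD Ω Ψ x - (2 * n - 1) * (‖Ψ x‖ ^ 2 / ‖x‖ ^ 2)
        + Ω * ‖Ψ x‖ ^ 2) := by
      apply integral_congr_ae
      filter_upwards [ae_restrict_mem B1_meas, hgr] with x hx e
      have a1 : (starRingEnd ℂ (dw Ψ x) * angMom (dw Ψ) x).re = (n - 1) * ‖Ψ x‖ ^ 2 := by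
        rw [dw_ang (pre_diff h.pre hx) (hn x hx), ← dw_norm h0, nsq]; simp; ring
      have a2 : (starRingEnd ℂ (Ψ x) * angMom Ψ x).re = n * ‖Ψ x‖ ^ 2 := by
        rw [hn x hx, nsq]; simp; ring
      rw [hD, hD, ← e, a1, a2]; ring
    have i1 : IntegrableOn (fun x => hD Ω Ψ x - (2 * n - 1) * (‖Ψ x‖ ^ 2 / ‖x‖ ^ 2)) B1 :=
      (pre_hD h.pre Ω).sub (hg.const_mul _)
    rw [this, integral_add i1 (h.2.1.const_mul _),
      integral_sub (pre_hD h.pre Ω) (hg.const_mul _), integral_const_mul, integral_const_mul,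
      h.2.2.2.2.2]
    ring

/-- second moment -/
def mm (Ψ : Pt → ℂ) : ℝ := ∫ x in B1, ‖x‖ ^ 2 * ‖Ψ x‖ ^ 2

/-- inverse second moment -/
def gi (Ψ : Pt → ℂ) : ℝ := ∫ x in B1, ‖Ψ x‖ ^ 2 / ‖x‖ ^ 2

lemma avg_use {ε : ℝ} (hε : 0 < ε) (hε1 : ε ≤ 1) {Φ : Pt → ℂ} (h : gpAdm Φ) {K : ℝ}
    (hK : (∫ x in B1, ‖Φ x‖ ^ 4) ≤ K) (hs2 : ε * (K + π) ≤ 1) (Ω k : ℝ)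
    (hk : ∀ x ∈ B1, angMom Φ x = (k : ℂ) * Φ x) :
    ∃ A : ℝ, 1 ≤ A ∧ A ≤ 1 + 3 * ε ∧ A * (gpGround ε Ω - gpEnergy ε Ω Φ) ≤
      2 * |Real.log ε| + 8 + 2 * K + 2 * k - Ω * mm Φ := by
  have hs3 : ε * ((∫ x in B1, ‖Φ x‖ ^ 4) + π) ≤ 1 := by
    refine le_trans ?_ hs2
    gcongr
  have key := vortex_avg hε hε1 h hs3 ε Ω k hk
  obtain ⟨b1, b2⟩ := kap_bd hε
  have hpi := Real.pi_pos
  refine ⟨(π * (1 + ε) ^ 2 - kap ε) / π, ?_, ?_, ?_⟩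
  · rw [le_div_iff₀ hpi]; nlinarith
  · rw [div_le_iff₀ hpi]
    have : ε ^ 2 ≤ ε := by nlinarith
    nlinarith
  · rw [div_mul_eq_mul_div, div_le_iff₀ hpi]
    refine key.trans ?_
    have q0 : 0 ≤ ∫ x in B1, ‖Φ x‖ ^ 4 := integral_nonneg (fun x => by positivity)
    have e : 2 * ((∫ x in B1, ‖Φ x‖ ^ 4) / ε ^ 2) * kap ε ≤ 2 * K * π := by
      calc 2 * ((∫ x in B1, ‖Φ x‖ ^ 4) / ε ^ 2) * kap ε
          ≤ 2 * ((∫ x in B1, ‖Φ x‖ ^ 4) / ε ^ 2) * (π * ε ^ 2) := by gcongr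
        _ = 2 * (∫ x in B1, ‖Φ x‖ ^ 4) * π := by field_simp
        _ ≤ 2 * K * π := by gcongr
    unfold mm
    nlinarith

lemma I1 {ε Ω : ℝ} (hε : 0 < ε) (hε1 : ε ≤ 1) {Ψ : Pt → ℂ} (h : IsGPMinimizer ε Ω Ψ) {K : ℝ}
    (hK : (∫ x in B1, ‖Ψ x‖ ^ 4) ≤ K) (hs2 : ε * (K + π) ≤ 1) {n : ℤ}
    (hn : ∀ x ∈ B1, angMom Ψ x = (n : ℂ) * Ψ x) :
    Ω * mm Ψ - (2 * |Real.log ε| + 8 + 2 * K) ≤ 2 * n := by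
  obtain ⟨A, a1, a2, a3⟩ := avg_use hε hε1 h.1 hK hs2 Ω n (by simpa using hn)
  rw [h.2] at a3
  simp only [sub_self, mul_zero] at a3
  linarith

lemma gi_ge1 {Ψ : Pt → ℂ} (h : gpAdm Ψ) {n : ℤ} (h2 : 2 ≤ n)
    (hn : ∀ x ∈ B1, angMom Ψ x = (n : ℂ) * Ψ x) : 1 ≤ gi Ψ := by
  rw [← h.2.2.2.2.2, gi]
  apply integral_mono_ae h.2.1 (g_int h.pre h2 hn)
  filter_upwards [ae_restrict_mem B1_meas, ae_ne0] with x hx hx0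
  have hp : 0 < ‖x‖ := by simpa using hx0
  rw [le_div_iff₀ (by positivity)]
  apply mul_le_of_le_one_right (by positivity)
  exact pow_le_one₀ hp.le (B1_norm hx).le

lemma I2 {ε Ω C : ℝ} (hε : 0 < ε) (hε1 : ε ≤ 1) (hΩ : 0 ≤ Ω) (hC : Ω * ε ≤ C) {Ψ : Pt → ℂ}
    (h : IsGPMinimizer ε Ω Ψ) {K : ℝ}
    (hK : (∫ x in B1, ‖Ψ x‖ ^ 4) ≤ K) (hs2 : ε * (K + π) ≤ 1) {n : ℤ} (h2 : 2 ≤ n)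
    (hn : ∀ x ∈ B1, angMom Ψ x = (n : ℂ) * Ψ x) :
    (Ω * mm Ψ - (2 * |Real.log ε| + 9 + 2 * K + 3 * C)) * gi Ψ ≤ Ω := by
  obtain ⟨d1, d2⟩ := dw_main h.1 h2 hn ε Ω
  have h0 := (eig_fderiv0 h.1.1 n h2 hn).1
  obtain ⟨A, a1, a2, a3⟩ := avg_use hε hε1 d1 (K := K) (by simp_rw [dw_norm h0]; exact hK) hs2 Ω (n - 1)
    (by intro x hx; have := dw_ang (pre_diff h.1.pre hx) (hn x hx); push_cast at *; exact this)
  have e1 : mm (dw Ψ) = mm Ψ := by unfold mm; simp_rw [dw_norm h0]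
  change _ = _ - (2 * n - 1) * gi Ψ + Ω at d2
  rw [d2, h.2, e1] at a3
  have g1 := gi_ge1 h.1 h2 hn
  have i1 := I1 hε hε1 h hK hs2 hn
  have hnr : (2:ℝ) ≤ n := by exact_mod_cast h2
  have b1 : (2 * n - 1) * gi Ψ ≤ A * ((2 * n - 1) * gi Ψ) :=
    le_mul_of_one_le_left (by nlinarith) a1
  have b2 : A * Ω ≤ (1 + 3 * ε) * Ω := by gcongr
  have b3 : (2 * n - 1) * gi Ψ ≤ Ω + 3 * C + 2 * |Real.log ε| + 8 + 2 * K + 2 * n - Ω * mm Ψ := by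
    nlinarith
  have hC0 : 0 ≤ C := le_trans (by positivity) hC
  nlinarith

lemma w_int {w : Pt → ℝ} (hw : Measurable w) {W : ℝ} (h0 : ∀ x ∈ B1, 0 ≤ w x ∧ w x ≤ W)
    {u : Pt → ℝ} (hu : IntegrableOn u B1) : IntegrableOn (fun x => w x * u x) B1 := by
  refine Integrable.bdd_mul (c := W) hu hw.aestronglyMeasurable ?_
  filter_upwards [ae_restrict_mem B1_meas] with x hx
  rw [Real.norm_eq_abs, abs_of_nonneg (h0 x hx).1]
  exact (h0 x hx).2

lemma weight {Ψ : Pt → ℂ} (h : gpAdm Ψ) {w : Pt → ℝ} (hw : Measurable w) {W : ℝ}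
    (h0 : ∀ x ∈ B1, 0 ≤ w x ∧ w x ≤ W) {η t : ℝ} (ht : 0 < t)
    (hη : (∫ x in B1, ‖Ψ x‖ ^ 4) ≤ 1 / π + η) :
    (1 / π) * (∫ x in B1, w x) - π * t - W ^ 2 * η / (4 * t) ≤ ∫ x in B1, w x * ‖Ψ x‖ ^ 2 := by
  have hpi := Real.pi_pos
  have iw : IntegrableOn w B1 := by
    have := w_int hw h0 (u := fun _ => 1) (integrable_const 1)
    simpa using this
  have ic : IntegrableOn (fun _ : Pt => (1:ℝ)) B1 := integrable_const 1
  set a : ℝ := W ^ 2 / (4 * t) with ha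
  have iF : IntegrableOn (fun x => ((1 / π) * w x - (t + a / π ^ 2) * 1) -
      (a * ‖Ψ x‖ ^ 4 - (2 * a / π) * ‖Ψ x‖ ^ 2)) B1 :=
    ((iw.const_mul _).sub (ic.const_mul _)).sub
      ((h.2.2.2.1.const_mul _).sub (h.2.1.const_mul _))
  have key := setIntegral_mono_on iF (w_int hw h0 h.2.1) B1_meas (fun x hx => by
    obtain ⟨w0, w1⟩ := h0 x hx
    set d := ‖Ψ x‖ ^ 2 - 1 / π with hd
    have e : ‖Ψ x‖ ^ 4 = (‖Ψ x‖ ^ 2) ^ 2 := by ring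
    have e2 : ‖Ψ x‖ ^ 2 = d + 1 / π := by rw [hd]; ring
    rw [e, e2]
    have q : 0 ≤ w x * d + t + a * d ^ 2 := by
      have q1 : 0 ≤ w x * d + t + w x ^ 2 * d ^ 2 / (4 * t) := by
        have : w x * d + t + w x ^ 2 * d ^ 2 / (4 * t) = (2 * t + w x * d) ^ 2 / (4 * t) := by
          field_simp; ring
        rw [this]; positivity
      have q2 : w x ^ 2 * d ^ 2 / (4 * t) ≤ a * d ^ 2 := by
        rw [ha, div_mul_eq_mul_div]
        gcongr
      linarith
    have r : w x * (d + 1 / π) - ((1 / π) * w x - (t + a / π ^ 2) * 1 -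
      (a * (d + 1 / π) ^ 2 - (2 * a / π) * (d + 1 / π))) = w x * d + t + a * d ^ 2 := by
      field_simp; ring
    linarith)
  refine le_trans ?_ key
  have e1 := integral_sub (((iw.const_mul (1 / π)).sub (ic.const_mul (t + a / π ^ 2))))
      ((h.2.2.2.1.const_mul a).sub (h.2.1.const_mul (2 * a / π)))
  simp only [Pi.sub_apply] at e1
  rw [e1, integral_sub (iw.const_mul (1 / π)) (ic.const_mul (t + a / π ^ 2)),
    integral_sub (h.2.2.2.1.const_mul a) (h.2.1.const_mul (2 * a / π))]
  simp only [integral_const_mul]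
  rw [h.2.2.2.2.2]
  have e3 : ∫ x in B1, (1:ℝ) = π := by simp [B1_vol]
  rw [e3]
  have ha0 : 0 ≤ a := by positivity
  have e4 : W ^ 2 * η / (4 * t) = a * η := by rw [ha]; ring
  rw [e4]
  have e5 := mul_le_mul_of_nonneg_left hη ha0
  have e6 : (t + a / π ^ 2) * π = π * t + a / π := by field_simp
  have e7 : a * (1 / π + η) = a / π + a * η := by ring
  have e8 : 2 * a / π = a / π + a / π := by ring
  rw [e6, e8]
  linarith

lemma rsq_int : ∫ x in B1, ‖x‖ ^ 2 = π / 2 := by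
  have e := radial_int ((Set.Iio 1).indicator (fun y => y ^ 2))
  have e1 : (∫ x : Pt, (Set.Iio (1:ℝ)).indicator (fun y => y ^ 2) ‖x‖) = ∫ x in B1, ‖x‖ ^ 2 := by
    rw [← integral_indicator B1_meas]
    congr 1
    ext x
    simp only [Set.indicator, B1, Set.mem_Iio, Metric.mem_ball, dist_zero_right]
  rw [← e1, e]
  have e2 : (∫ y in Set.Ioi (0:ℝ), y * (Set.Iio 1).indicator (fun y => y ^ 2) y) = 1 / 4 := by
    have : (fun y : ℝ => y * (Set.Iio 1).indicator (fun y => y ^ 2) y) =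
        (Set.Iio 1).indicator (fun y => y ^ 3) := by
      ext y
      simp only [Set.indicator]
      split_ifs <;> ring
    rw [this, setIntegral_indicator measurableSet_Iio, Set.Ioi_inter_Iio,
      ← integral_Ioc_eq_integral_Ioo, ← intervalIntegral.integral_of_le zero_le_one, integral_pow]
    norm_num
  rw [e2]; ring

lemma ann_B1 {s T : ℝ} (hs : 0 < s) (hT : s ≤ T) (h1 : T < 1) :
    ∫ x in B1, (Set.Ioc s T).indicator (fun y => (y ^ 2)⁻¹) ‖x‖ = 2 * π * Real.log (T / s) := by
  rw [← annulus_int hs hT]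
  apply setIntegral_eq_integral_of_forall_compl_eq_zero
  intro x hx
  apply Set.indicator_of_notMem
  intro hx2
  apply hx
  simp only [B1, Metric.mem_ball, dist_zero_right]
  exact hx2.2.trans_lt h1

lemma reg1_m {Ψ : Pt → ℂ} (h : gpAdm Ψ) {η : ℝ} (hη1 : η ≤ Real.exp (-24) / 40000)
    (hη : (∫ x in B1, ‖Ψ x‖ ^ 4) ≤ 1 / π + η) : 0.45 ≤ mm Ψ := by
  have := weight h (w := fun x => ‖x‖ ^ 2) (by fun_prop) (W := 1) (fun x hx =>
    ⟨by positivity, pow_le_one₀ (norm_nonneg _) (B1_norm hx).le⟩) (t := 0.01) (by norm_num) hη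
  rw [rsq_int] at this
  have e : 1 / π * (π / 2) = 1 / 2 := by field_simp
  rw [e] at this
  have hp := Real.pi_lt_d2
  have he : Real.exp (-24) ≤ 1 := Real.exp_le_one_iff.2 (by norm_num)
  unfold mm
  refine le_trans ?_ this
  norm_num
  nlinarith

lemma reg1_g {Ψ : Pt → ℂ} (h : gpAdm Ψ) {n : ℤ} (h2 : 2 ≤ n)
    (hn : ∀ x ∈ B1, angMom Ψ x = (n : ℂ) * Ψ x) {η : ℝ} (hη1 : η ≤ Real.exp (-24) / 40000)
    (hη : (∫ x in B1, ‖Ψ x‖ ^ 4) ≤ 1 / π + η) : 11 ≤ gi Ψ := by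
  set s := Real.exp (-6) with hs
  set T := Real.exp (-(1/10)) with hT
  have s0 : 0 < s := Real.exp_pos _
  have wm : Measurable (fun x : Pt => (Set.Ioc s T).indicator (fun y => (y ^ 2)⁻¹) ‖x‖) :=
    (Measurable.indicator (by fun_prop) measurableSet_Ioc).comp measurable_norm
  have wb : ∀ x ∈ B1, 0 ≤ (Set.Ioc s T).indicator (fun y => (y ^ 2)⁻¹) ‖x‖ ∧
      (Set.Ioc s T).indicator (fun y => (y ^ 2)⁻¹) ‖x‖ ≤ Real.exp 12 := by
    intro x hx
    refine ⟨Set.indicator_nonneg (fun y _ => by positivity) _, ?_⟩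
    by_cases hm : ‖x‖ ∈ Set.Ioc s T
    · rw [Set.indicator_of_mem hm]
      have : Real.exp 12 = (s ^ 2)⁻¹ := by
        rw [hs, ← Real.exp_nat_mul, ← Real.exp_neg]; norm_num
      rw [this]
      have := hm.1
      gcongr
    · rw [Set.indicator_of_notMem hm]; positivity
  have := weight h wm wb (t := 0.01) (by norm_num) hη
  rw [ann_B1 s0 (Real.exp_le_exp.2 (by norm_num)) (by rw [Real.exp_lt_one_iff]; norm_num)] at this
  have el : Real.log (T / s) = 5.9 := by
    rw [hT, hs, ← Real.exp_sub, Real.log_exp]; norm_num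
  rw [el] at this
  have e : 1 / π * (2 * π * 5.9) = 11.8 := by field_simp; norm_num
  rw [e] at this
  have hp := Real.pi_lt_d2
  have hx : Real.exp 12 ^ 2 * η ≤ 1 / 40000 := by
    have h1 : Real.exp 12 ^ 2 * Real.exp (-24) = 1 := by
      rw [← Real.exp_nat_mul, ← Real.exp_add]; norm_num
    calc Real.exp 12 ^ 2 * η ≤ Real.exp 12 ^ 2 * (Real.exp (-24) / 40000) := by gcongr
      _ = (Real.exp 12 ^ 2 * Real.exp (-24)) / 40000 := by ring
      _ = 1 / 40000 := by rw [h1]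
  have h3 : (11:ℝ) ≤ 11.8 - π * 0.01 - Real.exp 12 ^ 2 * η / (4 * 0.01) := by
    have : Real.exp 12 ^ 2 * η / (4 * 0.01) = Real.exp 12 ^ 2 * η * 25 := by ring
    rw [this]; norm_num; linarith
  refine h3.trans (this.trans ?_)
  rw [gi]
  refine setIntegral_mono_on (w_int wm wb h.2.1) (g_int h.pre h2 hn) B1_meas (fun x hx => ?_)
  by_cases hm : ‖x‖ ∈ Set.Ioc s T
  · rw [Set.indicator_of_mem hm, div_eq_inv_mul]
  · rw [Set.indicator_of_notMem hm, zero_mul]; positivity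

lemma S_vol {m β : ℝ} (hm : 0 ≤ m) (hβ : 0 < β) :
    volume.real ({x : Pt | |‖x‖ ^ 2 - m| < β} ∩ B1) ≤ 2 * π * β := by
  have hpi := Real.pi_pos
  set a := √(max (m - β) 0) with ha
  set b := √(m + β) with hb
  have hab : a ≤ b := Real.sqrt_le_sqrt (max_le (by linarith) (by linarith))
  have sub : ({x : Pt | |‖x‖ ^ 2 - m| < β} ∩ B1) ⊆ Metric.ball 0 b \ Metric.ball 0 a := by
    rintro x ⟨hx, -⟩
    have hx : |‖x‖ ^ 2 - m| < β := hx
    have hx := abs_lt.1 hx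
    simp only [Set.mem_sdiff, Metric.mem_ball, dist_zero_right, not_lt]
    constructor
    · apply Real.lt_sqrt_of_sq_lt; linarith [hx.2]
    · apply Real.sqrt_le_iff.2 ⟨norm_nonneg _, max_le (by linarith [hx.1]) (by positivity)⟩
  refine (measureReal_mono sub (ne_top_of_le_ne_top measure_ball_lt_top.ne
    (measure_mono Set.sdiff_subset))).trans ?_
  rw [measureReal_sdiff (Metric.ball_subset_ball hab) measurableSet_ball measure_ball_lt_top.ne,
    pt_ball_vol _ (Real.sqrt_nonneg _), pt_ball_vol _ (Real.sqrt_nonneg _),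
    Real.sq_sqrt (by positivity), Real.sq_sqrt (le_max_right _ _)]
  have := le_max_left (m - β) 0
  nlinarith

lemma reg2_V {Ψ : Pt → ℂ} (h : gpAdm Ψ) {K : ℝ} (hK0 : 0 < K)
    (hK : (∫ x in B1, ‖Ψ x‖ ^ 4) ≤ K) {β : ℝ} (hβ : β = 1 / (8 * π * K)) :
    IntegrableOn (fun x => (‖x‖ ^ 2 - mm Ψ) ^ 2 * ‖Ψ x‖ ^ 2) B1 ∧
    β ^ 2 / 4 ≤ ∫ x in B1, (‖x‖ ^ 2 - mm Ψ) ^ 2 * ‖Ψ x‖ ^ 2 := by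
  have hpi := Real.pi_pos
  have b0 : 0 < β := by rw [hβ]; positivity
  obtain ⟨m0, m1⟩ := m_bd h
  change 0 ≤ mm Ψ at m0
  change mm Ψ ≤ 1 at m1
  have iV : IntegrableOn (fun x => (‖x‖ ^ 2 - mm Ψ) ^ 2 * ‖Ψ x‖ ^ 2) B1 := by
    apply w_int (w := fun x => (‖x‖ ^ 2 - mm Ψ) ^ 2) (W := 1) (by fun_prop) _ h.2.1
    intro x hx
    refine ⟨by positivity, ?_⟩
    have := pow_le_one₀ (n := 2) (norm_nonneg _) (B1_norm hx).le
    have : 0 ≤ ‖x‖ ^ 2 := by positivity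
    apply sq_le_one_iff_abs_le_one _ |>.2
    rw [abs_le]; constructor <;> linarith
  refine ⟨iV, ?_⟩
  set S := {x : Pt | |‖x‖ ^ 2 - mm Ψ| < β} with hS
  have mS : MeasurableSet S := measurableSet_lt (by fun_prop) measurable_const
  have iS : IntegrableOn (S.indicator (fun _ => (1:ℝ))) B1 :=
    (integrable_const (1:ℝ)).indicator mS
  have eS : ∫ x in B1, S.indicator (fun _ => (1:ℝ)) x = volume.real (S ∩ B1) := by
    rw [integral_indicator mS]
    simp [Measure.restrict_restrict mS, measureReal_def]
  have iF : IntegrableOn (fun x => β ^ 2 * (‖Ψ x‖ ^ 2 - (1 / (4 * K) * ‖Ψ x‖ ^ 4 +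
      K * S.indicator (fun _ => (1:ℝ)) x))) B1 :=
    (h.2.1.sub ((h.2.2.2.1.const_mul _).add (iS.const_mul _))).const_mul _
  have key := setIntegral_mono_on iF iV B1_meas (fun x hx => by
    have hr : 0 ≤ ‖Ψ x‖ ^ 2 := by positivity
    have e : ‖Ψ x‖ ^ 4 = (‖Ψ x‖ ^ 2) ^ 2 := by ring
    by_cases hx : x ∈ S
    · rw [Set.indicator_of_mem hx]
      refine le_trans ?_ (by positivity : (0:ℝ) ≤ _)
      apply mul_nonpos_of_nonneg_of_nonpos (by positivity)
      rw [e]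
      have : ‖Ψ x‖ ^ 2 - (1 / (4 * K) * (‖Ψ x‖ ^ 2) ^ 2 + K * 1) =
        - ((‖Ψ x‖ ^ 2 - 2 * K) ^ 2 / (4 * K)) := by field_simp; ring
      rw [this]
      have : 0 ≤ (‖Ψ x‖ ^ 2 - 2 * K) ^ 2 / (4 * K) := by positivity
      linarith
    · rw [Set.indicator_of_notMem hx]
      have hx : β ≤ |‖x‖ ^ 2 - mm Ψ| := not_lt.1 hx
      have : β ^ 2 ≤ (‖x‖ ^ 2 - mm Ψ) ^ 2 := by
        rw [← sq_abs (‖x‖ ^ 2 - mm Ψ)]; gcongr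
      refine le_trans ?_ (mul_le_mul_of_nonneg_right this hr)
      gcongr
      have : 0 ≤ 1 / (4 * K) * ‖Ψ x‖ ^ 4 := by positivity
      linarith)
  refine le_trans ?_ key
  have e1 := integral_sub h.2.1 ((h.2.2.2.1.const_mul (1 / (4 * K))).add (iS.const_mul K))
  simp only [Pi.add_apply] at e1
  rw [integral_const_mul, e1,
    integral_add (h.2.2.2.1.const_mul _) (iS.const_mul _), integral_const_mul, integral_const_mul,
    eS, h.2.2.2.2.2]
  have v := S_vol m0 b0
  have v2 : K * volume.real (S ∩ B1) ≤ 1 / 4 := by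
    calc K * volume.real (S ∩ B1) ≤ K * (2 * π * β) := by gcongr
      _ = 1 / 4 := by rw [hβ]; field_simp; norm_num
  have v3 : 1 / (4 * K) * (∫ x in B1, ‖Ψ x‖ ^ 4) ≤ 1 / 4 := by
    calc 1 / (4 * K) * (∫ x in B1, ‖Ψ x‖ ^ 4) ≤ 1 / (4 * K) * K := by gcongr
      _ = 1 / 4 := by field_simp
  have : β ^ 2 / 4 = β ^ 2 * (1 / 4) := by ring
  rw [this]
  gcongr
  linarith

lemma reg2_m {Ψ : Pt → ℂ} (h : gpAdm Ψ) {K : ℝ} (hK0 : 0 < K)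
    (hK : (∫ x in B1, ‖Ψ x‖ ^ 4) ≤ K) {β : ℝ} (hβ : β = 1 / (8 * π * K)) :
    β ^ 2 / 4 ≤ mm Ψ := by
  obtain ⟨iV, hV⟩ := reg2_V h hK0 hK hβ
  refine hV.trans ?_
  obtain ⟨m0, m1⟩ := m_bd h
  change 0 ≤ mm Ψ at m0
  have i2 := xsq_int h.2.1
  have key := setIntegral_mono_on iV ((i2.const_mul (1 - 2 * mm Ψ)).add (h.2.1.const_mul (mm Ψ ^ 2)))
    B1_meas (fun x hx => by
      have hr : 0 ≤ ‖Ψ x‖ ^ 2 := by positivity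
      have := pow_le_one₀ (n := 2) (norm_nonneg _) (B1_norm hx).le
      have h3 : 0 ≤ ‖x‖ ^ 2 * (1 - ‖x‖ ^ 2) := mul_nonneg (by positivity) (by linarith)
      simp only [Pi.add_apply]
      nlinarith [mul_nonneg h3 hr])
  refine key.trans ?_
  have e := integral_add (i2.const_mul (1 - 2 * mm Ψ)) (h.2.1.const_mul (mm Ψ ^ 2))
  simp only [Pi.add_apply]
  rw [e, integral_const_mul, integral_const_mul, h.2.2.2.2.2]
  change (1 - 2 * mm Ψ) * mm Ψ + _ ≤ mm Ψ
  nlinarith [sq_nonneg (mm Ψ)]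

lemma reg2_g {Ψ : Pt → ℂ} (h : gpAdm Ψ) {n : ℤ} (h2 : 2 ≤ n)
    (hn : ∀ x ∈ B1, angMom Ψ x = (n : ℂ) * Ψ x) {K : ℝ} (hK0 : 0 < K)
    (hK : (∫ x in B1, ‖Ψ x‖ ^ 4) ≤ K) {β : ℝ} (hβ : β = 1 / (8 * π * K)) :
    1 + β ^ 2 / 4 ≤ mm Ψ * gi Ψ := by
  have hpi := Real.pi_pos
  have b0 : 0 < β := by rw [hβ]; positivity
  obtain ⟨iV, hV⟩ := reg2_V h hK0 hK hβ
  have hm := reg2_m h hK0 hK hβ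
  obtain ⟨m0, m1⟩ := m_bd h
  change mm Ψ ≤ 1 at m1
  have mp : 0 < mm Ψ := lt_of_lt_of_le (by positivity) hm
  have i2 := xsq_int h.2.1
  have ig := g_int h.pre h2 hn
  have iL := ((h.2.1.const_mul (2 * mm Ψ)).sub i2).add iV
  have key := integral_mono_ae iL (ig.const_mul (mm Ψ ^ 2)) (by
    filter_upwards [ae_restrict_mem B1_meas, ae_ne0] with x hx hx0
    have hp : 0 < ‖x‖ := by simpa using hx0
    simp only [Pi.add_apply, Pi.sub_apply]
    have hr : 0 ≤ ‖Ψ x‖ ^ 2 := by positivity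
    have t1 := pow_le_one₀ (n := 2) (norm_nonneg _) (B1_norm hx).le
    have t0 : 0 < ‖x‖ ^ 2 := by positivity
    set t := ‖x‖ ^ 2
    set r := ‖Ψ x‖ ^ 2
    rw [← mul_div_assoc, le_div_iff₀ t0]
    have q : 0 ≤ (t - mm Ψ) ^ 2 * (1 - t) := mul_nonneg (by positivity) (by linarith)
    nlinarith [mul_nonneg q hr])
  have e := integral_add ((h.2.1.const_mul (2 * mm Ψ)).sub i2) iV
  have e' := integral_sub (h.2.1.const_mul (2 * mm Ψ)) i2
  simp only [Pi.sub_apply] at e e'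
  simp only [Pi.add_apply, Pi.sub_apply] at key
  rw [e, e', integral_const_mul, integral_const_mul, h.2.2.2.2.2] at key
  change 2 * mm Ψ * 1 - mm Ψ + _ ≤ mm Ψ ^ 2 * gi Ψ at key
  have k2 : mm Ψ + β ^ 2 / 4 ≤ mm Ψ * (mm Ψ * gi Ψ) := by nlinarith
  have k3 : mm Ψ * (1 + β ^ 2 / 4) ≤ mm Ψ * (mm Ψ * gi Ψ) := by
    refine le_trans ?_ k2
    nlinarith [sq_nonneg β]
  exact le_of_mul_le_mul_left k3 mp

set_option maxHeartbeats 1000000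

theorem stmt5 (C : ℝ) (hC : 0 < C) : ∃ ε₀ : ℝ, 0 < ε₀ ∧ ∀ ε : ℝ, 0 < ε → ε < ε₀ →
    ∀ Ω : ℝ, 6 * |Real.log ε| + 3 < Ω → Ω ≤ C / ε →
    ¬ ∃ (Ψ : Pt → ℂ) (n : ℤ), IsGPMinimizer ε Ω Ψ ∧
      ∀ x ∈ B1, angMom Ψ x = (n : ℂ) * Ψ x := by
  have hpi := Real.pi_pos
  obtain ⟨K, hKd⟩ : ∃ K : ℝ, K = 1 / π + C ^ 2 / 4 := ⟨_, rfl⟩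
  have hK1 : 1 / π ≤ K := by rw [hKd]; nlinarith [sq_nonneg C]
  have hK0 : 0 < K := lt_of_lt_of_le (by positivity) hK1
  obtain ⟨β, hβ⟩ : ∃ β : ℝ, β = 1 / (8 * π * K) := ⟨_, rfl⟩
  have b0 : 0 < β := by rw [hβ]; positivity
  have b1 : β ≤ 1 := by
    rw [hβ, div_le_one (by positivity)]
    have := mul_le_mul_of_nonneg_left hK1 hpi.le
    have e : π * (1 / π) = 1 := by field_simp
    nlinarith
  obtain ⟨V, hV⟩ : ∃ V : ℝ, V = β ^ 2 / 4 := ⟨_, rfl⟩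
  have V0 : 0 < V := by rw [hV]; positivity
  have V1 : V ≤ 1 := by rw [hV]; nlinarith
  obtain ⟨A, hA⟩ : ∃ A : ℝ, A = 9 + 2 * K + 3 * C := ⟨_, rfl⟩
  obtain ⟨δ, hδ⟩ : ∃ δ : ℝ, δ = Real.exp (-12) / 100 := ⟨_, rfl⟩
  have d0 : 0 < δ := by rw [hδ]; positivity
  have id0 : Tendsto (fun ε : ℝ => ε) (nhdsWithin 0 (Set.Ioi 0)) (nhds 0) :=
    tendsto_nhdsWithin_of_tendsto_nhds tendsto_id
  have ev1 : ∀ᶠ ε in nhdsWithin (0:ℝ) (Set.Ioi 0), ε < 1 := id0.eventually_lt_const one_pos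
  have ev2 : ∀ᶠ ε in nhdsWithin (0:ℝ) (Set.Ioi 0), ε * (K + π) < 1 := by
    have := id0.mul_const (K + π)
    rw [zero_mul] at this
    exact this.eventually_lt_const one_pos
  have ev3 : ∀ᶠ ε in nhdsWithin (0:ℝ) (Set.Ioi 0), 10 * A + 1 / V ≤ |Real.log ε| :=
    (tendsto_abs_atBot_atTop.comp Real.tendsto_log_nhdsGT_zero).eventually_ge_atTop _
  have ev4 : ∀ᶠ ε in nhdsWithin (0:ℝ) (Set.Ioi 0), 2 * |Real.log ε * ε| + ε * A < δ * (V ^ 2 / 4) := by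
    have h0 : Tendsto (fun ε : ℝ => Real.log ε * ε) (nhdsWithin 0 (Set.Ioi 0)) (nhds 0) := by
      simpa only [Real.rpow_one] using tendsto_log_mul_rpow_nhdsGT_zero zero_lt_one
    have h1 := (h0.abs.const_mul 2).add (id0.mul_const A)
    simp only [abs_zero, mul_zero, zero_mul, add_zero] at h1
    exact h1.eventually_lt_const (by positivity)
  obtain ⟨ε₀, h0, hsub⟩ := mem_nhdsGT_iff_exists_Ioo_subset.1 (ev1.and (ev2.and (ev3.and ev4)))
  refine ⟨ε₀, h0, ?_⟩
  intro ε hε hεε Ω hΩ1 hΩ2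
  rintro ⟨Ψ, n, hmin, hn⟩
  obtain ⟨e1, e2, e3, e4⟩ := hsub ⟨hε, hεε⟩
  set l := |Real.log ε| with hl
  have e4 : 2 * (l * ε) + ε * A < δ * (V ^ 2 / 4) := by
    rw [abs_mul, abs_of_pos hε] at e4; exact e4
  have l0 : 0 ≤ l := abs_nonneg _
  have A9 : 9 ≤ A := by rw [hA]; linarith
  have iV : 0 < 1 / V := by positivity
  have l90 : 90 ≤ l := by linarith
  have Ω0 : 0 < Ω := by linarith
  have hΩε : Ω * ε ≤ C := (le_div_iff₀ hε).1 hΩ2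
  have hΩε0 : 0 < Ω * ε := by positivity
  have q1 := min_quartic hε hmin
  have hK : (∫ x in B1, ‖Ψ x‖ ^ 4) ≤ K := by
    refine q1.trans ?_
    rw [hKd]
    have : (Ω * ε) ^ 2 ≤ C ^ 2 := by gcongr
    nlinarith
  have i1 := I1 hε e1.le hmin hK e2.le hn
  have i2 : 2 ≤ n → (Ω * mm Ψ - (2 * l + A)) * gi Ψ ≤ Ω := by
    intro h2
    have := I2 hε e1.le Ω0.le hΩε hmin hK e2.le h2 hn
    rw [← hl] at this
    have e : 2 * l + A = 2 * l + 9 + 2 * K + 3 * C := by rw [hA]; ring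
    rwa [e]
  have i1' : Ω * mm Ψ - (2 * l + A) ≤ 2 * n := by
    rw [← hl] at i1; linarith
  have two_le : (2:ℝ) < Ω * mm Ψ - (2 * l + A) → 2 ≤ n := by
    intro h
    have h3 : (1:ℝ) < n := by linarith
    have : 1 < n := by exact_mod_cast h3
    linarith
  rcases le_total (Ω * ε) δ with hr | hr
  · have hη1 : Ω ^ 2 * ε ^ 2 / 4 ≤ Real.exp (-24) / 40000 := by
      have h1 : (Ω * ε) ^ 2 ≤ δ ^ 2 := by gcongr
      have h2 : δ ^ 2 = Real.exp (-24) / 10000 := by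
        rw [hδ, div_pow, ← Real.exp_nat_mul]; norm_num
      nlinarith
    have m1 := reg1_m hmin.1 hη1 q1
    have T : 2 * l + A ≤ 0.35 * Ω := by
      norm_num; linarith
    have m2 : 0.45 * Ω ≤ Ω * mm Ψ := by nlinarith
    have m3 : 0.1 * Ω ≤ Ω * mm Ψ - (2 * l + A) := by
      norm_num at m2 T ⊢; linarith
    have h2 := two_le (by norm_num at m3 ⊢; linarith)
    have g1 := reg1_g hmin.1 h2 hn hη1 q1
    have := i2 h2
    have m4 : 0.1 * Ω * 11 ≤ (Ω * mm Ψ - (2 * l + A)) * gi Ψ :=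
      mul_le_mul m3 g1 (by norm_num) (le_trans (by positivity) m3)
    norm_num at m4
    linarith
  · have m1 := reg2_m hmin.1 hK0 hK hβ
    rw [← hV] at m1
    have T : 2 * l + A ≤ Ω * (V ^ 2 / 4) := by
      have h1 : (2 * l + A) * δ ≤ (2 * l + A) * (Ω * ε) := by gcongr
      have h2 : Ω * (2 * (l * ε) + ε * A) ≤ Ω * (δ * (V ^ 2 / 4)) := by gcongr
      have h3 : (2 * l + A) * δ ≤ (Ω * (V ^ 2 / 4)) * δ := by
        have r1 : (2 * l + A) * (Ω * ε) = Ω * (2 * (l * ε) + ε * A) := by ring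
        have r2 : Ω * (δ * (V ^ 2 / 4)) = (Ω * (V ^ 2 / 4)) * δ := by ring
        linarith
      exact le_of_mul_le_mul_right h3 d0
    have T2 : 2 * l + A ≤ Ω * mm Ψ * (V / 4) := by
      refine T.trans ?_
      have : Ω * (V ^ 2 / 4) = Ω * V * (V / 4) := by ring
      rw [this]
      gcongr
    have m2 : Ω * mm Ψ * (1 - V / 4) ≤ Ω * mm Ψ - (2 * l + A) := by linarith
    have m0 : 0 < Ω * mm Ψ := mul_pos Ω0 (by linarith)
    have h6 : 6 ≤ Ω * mm Ψ := by
      have lV : 1 ≤ l * V := by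
        have : 1 / V ≤ l := by linarith
        rwa [div_le_iff₀ V0] at this
      have h7 : (6 * l) * V ≤ Ω * mm Ψ := by gcongr; linarith
      linarith
    have h34 : 6 * (3 / 4) ≤ Ω * mm Ψ * (1 - V / 4) := by
      apply mul_le_mul h6 (by linarith) (by norm_num) m0.le
    have h2 := two_le (by linarith)
    have g1 := reg2_g hmin.1 h2 hn hK0 hK hβ
    rw [← hV] at g1
    have g0 := gi_ge1 hmin.1 h2 hn
    have := i2 h2
    have m3 : Ω * mm Ψ * (1 - V / 4) * gi Ψ ≤ (Ω * mm Ψ - (2 * l + A)) * gi Ψ := by gcongr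
    have m4 : Ω * ((1 - V / 4) * (1 + V)) ≤ Ω * ((1 - V / 4) * (mm Ψ * gi Ψ)) := by
      have : 0 ≤ 1 - V / 4 := by linarith
      gcongr
    have m5 : 1 < (1 - V / 4) * (1 + V) := by
      have r1 : (1 - V / 4) * (1 + V) = 1 + V * (3 / 4 - V / 4) := by ring
      have r2 : 0 < V * (3 / 4 - V / 4) := mul_pos V0 (by linarith)
      linarith
    have m6 := mul_lt_mul_of_pos_left m5 Ω0
    have m7 : Ω * ((1 - V / 4) * (mm Ψ * gi Ψ)) = Ω * mm Ψ * (1 - V / 4) * gi Ψ := by ring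
    linarith
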